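/- If G is a bipartite graph such that R/I(G) is sequentially Cohen-Macaulay, then reg(R/I(G)) = im(G), the induced matching number of G. -/

import Mathlib

open MvPolynomial

/-- A finite graded free resolution of `R/I`, where `R = K[x₁,…,xₙ]`.
`F_i = ⊕_j R(-tw i j)` with `rk i` summands, differentials `δ i : F_{i+1} → F_i`
given by matrices with homogeneous entries of the correct degrees, exact, and
augmented by a degree-preserving surjection `F₀ → R/I`. -/
structure GFR (n : ℕ) (K : Type) [Field K] (I : Ideal (MvPolynomial (Fin n) K)) : Type where
  len : ℕ
  rk : ℕ → ℕ
  rk_zero : ∀ i, len < i → rk i = 0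
  tw : (i : ℕ) → Fin (rk i) → ℕ
  δ : (i : ℕ) → ((Fin (rk (i + 1)) → MvPolynomial (Fin n) K) →ₗ[MvPolynomial (Fin n) K]
        (Fin (rk i) → MvPolynomial (Fin n) K))
  δ_homog : ∀ (i : ℕ) (k : Fin (rk (i + 1))) (j : Fin (rk i)),
      δ i (Pi.single k 1) j = 0 ∨
        (tw i j ≤ tw (i + 1) k ∧ (δ i (Pi.single k 1) j).IsHomogeneous (tw (i + 1) k - tw i j))
  aug : (Fin (rk 0) → MvPolynomial (Fin n) K) →ₗ[MvPolynomial (Fin n) K] MvPolynomial (Fin n) K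
  aug_homog : ∀ j : Fin (rk 0), (aug (Pi.single j 1)).IsHomogeneous (tw 0 j)
  aug_surj : ∀ r : MvPolynomial (Fin n) K, ∃ x, r - aug x ∈ I
  exact_zero : LinearMap.range (δ 0) = Submodule.comap aug I
  exact_succ : ∀ i : ℕ, LinearMap.range (δ (i + 1)) = LinearMap.ker (δ i)

/-- The Castelnuovo–Mumford regularity of `R/I`:
the least `r` such that `R/I` admits a (finite) graded free resolution all of whose
`i`-th twists are at most `r + i`.  (This value is attained by the minimal graded free
resolution, so it equals `max { j - i : b_{ij}(R/I) ≠ 0 }`.) -/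
noncomputable def regR {n : ℕ} {K : Type} [Field K] (I : Ideal (MvPolynomial (Fin n) K)) : ℕ :=
  sInf { r : ℕ | ∃ F : GFR n K I, ∀ (i : ℕ) (j : Fin (F.rk i)), F.tw i j ≤ r + i }

/-- The maximal graded ideal `m = (x₁,…,xₙ)` of `K[x₁,…,xₙ]`. -/
noncomputable def maxIdeal (n : ℕ) (K : Type) [Field K] : Ideal (MvPolynomial (Fin n) K) :=
  Ideal.span (Set.range (X : Fin n → MvPolynomial (Fin n) K))

/-- The depth of a module `M` over `R = K[x₁,…,xₙ]` with respect to the maximal graded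
ideal `m`: the largest length of an `M`-regular sequence contained in `m`. -/
noncomputable def depthR (n : ℕ) (K : Type) [Field K] (M : Type)
    [AddCommGroup M] [Module (MvPolynomial (Fin n) K) M] : ℕ :=
  sSup { k : ℕ | ∃ rs : List (MvPolynomial (Fin n) K), rs.length = k ∧
    (∀ r ∈ rs, r ∈ maxIdeal n K) ∧ RingTheory.Sequence.IsRegular M rs }

/-- The (Krull) dimension of a module `M` over `R = K[x₁,…,xₙ]`:
the Krull dimension of `R/ann(M)`. -/
noncomputable def dimR (n : ℕ) (K : Type) [Field K] (M : Type)
    [AddCommGroup M] [Module (MvPolynomial (Fin n) K) M] : WithBot (WithTop ℕ) :=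
  ringKrullDim (MvPolynomial (Fin n) K ⧸ Module.annihilator (MvPolynomial (Fin n) K) M)

/-- A module over `R = K[x₁,…,xₙ]` is Cohen–Macaulay if it is zero or
its depth equals its Krull dimension. -/
def IsCMmod (n : ℕ) (K : Type) [Field K] (M : Type)
    [AddCommGroup M] [Module (MvPolynomial (Fin n) K) M] : Prop :=
  Subsingleton M ∨ (((depthR n K M : ℕ) : WithTop ℕ) : WithBot (WithTop ℕ)) = dimR n K M

/-- The subquotient `B/A` of a module, for submodules `A ≤ B`. -/
abbrev subQuot {R M : Type} [CommRing R] [AddCommGroup M] [Module R M]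
    (A B : Submodule R M) : Type :=
  ↥B ⧸ Submodule.comap B.subtype A

/-- A submodule `W` of `R/I` is graded (homogeneous) if it is stable under taking
homogeneous components of representatives. -/
def IsGradedSub {n : ℕ} {K : Type} [Field K] (I : Ideal (MvPolynomial (Fin n) K))
    (W : Submodule (MvPolynomial (Fin n) K) (MvPolynomial (Fin n) K ⧸ I)) : Prop :=
  ∀ p : MvPolynomial (Fin n) K, Ideal.Quotient.mk I p ∈ W →
    ∀ d : ℕ, Ideal.Quotient.mk I (homogeneousComponent d p) ∈ W

/-- `R/I` is sequentially Cohen–Macaulay: there is a finite filtration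
`0 = M₀ ⊆ M₁ ⊆ ⋯ ⊆ M_r = R/I` by graded submodules whose successive quotients are
Cohen–Macaulay with strictly increasing Krull dimensions. -/
def IsSeqCM {n : ℕ} (K : Type) [Field K] (I : Ideal (MvPolynomial (Fin n) K)) : Prop :=
  ∃ (r : ℕ) (Mf : Fin (r + 1) → Submodule (MvPolynomial (Fin n) K)
      (MvPolynomial (Fin n) K ⧸ I)),
    Mf 0 = ⊥ ∧ Mf (Fin.last r) = ⊤ ∧
    (∀ i : Fin r, Mf i.castSucc ≤ Mf i.succ) ∧
    (∀ i : Fin (r + 1), IsGradedSub I (Mf i)) ∧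
    (∀ i : Fin r, IsCMmod n K (subQuot (Mf i.castSucc) (Mf i.succ))) ∧
    (∀ i j : Fin r, i < j →
      dimR n K (subQuot (Mf i.castSucc) (Mf i.succ)) <
        dimR n K (subQuot (Mf j.castSucc) (Mf j.succ)))

/-- The edge ideal of a (simple) graph, in `K[x_v : v ∈ V]`. -/
noncomputable def graphIdeal (K : Type) [Field K] {V : Type} (G : SimpleGraph V) :
    Ideal (MvPolynomial V K) :=
  Ideal.span { m : MvPolynomial V K | ∃ u v : V, G.Adj u v ∧ m = X u * X v }

/-- An induced matching of a graph: pairwise disjoint edges `f 0, …, f (r-1)` such that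
the only edges of `G` joining two vertices of their union are the `f i` themselves. -/
def SimpleGraph.IsInducedMatching {V : Type} [DecidableEq V] (G : SimpleGraph V)
    {r : ℕ} (f : Fin r → V × V) : Prop :=
  (∀ i, G.Adj (f i).1 (f i).2) ∧
  (∀ i j, i ≠ j → Disjoint ({(f i).1, (f i).2} : Finset V) {(f j).1, (f j).2}) ∧
  (∀ u v : V, G.Adj u v →
    u ∈ Finset.univ.biUnion (fun i => ({(f i).1, (f i).2} : Finset V)) →
    v ∈ Finset.univ.biUnion (fun i => ({(f i).1, (f i).2} : Finset V)) →
    ∃ i, ({u, v} : Finset V) = {(f i).1, (f i).2})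

/-- The induced matching number of a graph. -/
noncomputable def imG {V : Type} [DecidableEq V] (G : SimpleGraph V) : ℕ :=
  sSup { r : ℕ | ∃ f : Fin r → V × V, G.IsInducedMatching f }

/-- A graph is bipartite if its vertex set splits into two parts such that every edge
joins the two parts. -/
def SimpleGraph.IsBipartiteGraph {V : Type} (G : SimpleGraph V) : Prop :=
  ∃ A : Set V, ∀ u v : V, G.Adj u v → (u ∈ A ↔ v ∉ A)

/-!
The inequality `im(G) ≤ reg(R/I(G))` holds for every graph: if the edges `xᵢyᵢ`, `i = 1, …, r`, form
an induced matching, then `x₁⋯x_r e_{y₁} ∧ ⋯ ∧ e_{y_r}` represents a nonzero Koszul homology class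
of homological degree `r` and internal degree `2r`.

The converse needs a leaf. If `x` is a leaf of a subgraph with neighbour `y`, then `I : y` and
`I + (y)` are again generated by edges and variables, the edges being those of the subgraph without
the closed neighbourhood of `y`, respectively of `x`; and adding the edge `xy` to an induced
matching of the former subgraph gives one of the whole. So the exact sequence
`0 → R/(I : y)(-1) → R/I → R/(I + (y)) → 0` bounds the regularity by induction, as long as the
subgraphs that arise, which are links of the independence complex, are edgeless or have a leaf.

Sequential Cohen–Macaulayness supplies the leaf. It makes `Ext¹` vanish locally between a small
face and the layers of large dimension, which yields connectivity in codimension one: a large face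
meeting `F₁` in codimension at least two can be replaced by one with a larger trace on `F₁`. In a
link with no isolated vertices and with parts `A` and `B`, `|A| ≤ |B|`, apply this to `F₁ = A`: a
large face with maximal trace on `A` contains some `b ∈ B` and misses the neighbours of `b`, so that
`b` has only one.
-/

namespace SeqCMBipartite

/-! ### Bounded graded free resolutions -/

section GradedFree

variable {σ K : Type} [CommRing K]

/-- The degree `d` piece of the twisted ring `R(-s)`, where `R = K[σ]`; it is zero if `d < s`. -/
noncomputable def twistedPiece (s d : ℕ) : AddSubgroup (MvPolynomial σ K) :=
  if s ≤ d then (homogeneousSubmodule σ K (d - s)).toAddSubgroup else ⊥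

theorem mem_twistedPiece {s d : ℕ} {p : MvPolynomial σ K} :
    p ∈ twistedPiece s d ↔ p = 0 ∨ (s ≤ d ∧ p.IsHomogeneous (d - s)) := by
  unfold twistedPiece
  split_ifs with h
  · simp only [h, true_and]
    exact ⟨Or.inr, fun hp => hp.elim (fun h0 => h0 ▸ zero_mem _) id⟩
  · simp [h]

theorem mem_twistedPiece_zero {d : ℕ} {p : MvPolynomial σ K} :
    p ∈ twistedPiece 0 d ↔ p.IsHomogeneous d := by
  simp only [mem_twistedPiece, zero_le, true_and, Nat.sub_zero, or_iff_right_iff_imp]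
  rintro rfl
  exact isHomogeneous_zero _ _ _

theorem mem_twistedPiece_succ_zero {s : ℕ} {p : MvPolynomial σ K} :
    p ∈ twistedPiece (s + 1) 0 ↔ p = 0 := by
  simp [mem_twistedPiece]

theorem mem_twistedPiece_succ_succ {s d : ℕ} {p : MvPolynomial σ K} :
    p ∈ twistedPiece (s + 1) (d + 1) ↔ p ∈ twistedPiece s d := by
  simp [mem_twistedPiece]

/-- The projection of the twisted ring `R(-s)` onto its degree `d` piece. -/
noncomputable def twistedComponent (s d : ℕ) : MvPolynomial σ K →ₗ[K] MvPolynomial σ K :=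
  if s ≤ d then homogeneousComponent (d - s) else 0

theorem twistedComponent_mem (s d : ℕ) (p : MvPolynomial σ K) :
    twistedComponent s d p ∈ twistedPiece s d := by
  unfold twistedComponent
  split_ifs with h
  · exact mem_twistedPiece.2 (Or.inr ⟨h, homogeneousComponent_isHomogeneous _ _⟩)
  · exact zero_mem _

theorem twistedComponent_of_mem {s d : ℕ} {p : MvPolynomial σ K} (hp : p ∈ twistedPiece s d) :
    twistedComponent s d p = p := by
  rcases mem_twistedPiece.1 hp with rfl | ⟨hsd, hp⟩
  · exact map_zero _
  · rw [twistedComponent, if_pos hsd, homogeneousComponent_eq_self hp]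

theorem twistedComponent_mem_of_mem {I : Ideal (MvPolynomial σ K)}
    (hI : ∀ p ∈ I, ∀ d, homogeneousComponent d p ∈ I) {p : MvPolynomial σ K} (hp : p ∈ I)
    (s d : ℕ) : twistedComponent s d p ∈ I := by
  unfold twistedComponent
  split_ifs
  · exact hI _ hp _
  · exact zero_mem _

theorem homogeneousComponent_mul_of_isHomogeneous (d e : ℕ) (p : MvPolynomial σ K)
    {q : MvPolynomial σ K} (hq : q.IsHomogeneous e) :
    homogeneousComponent d (p * q) =
      if e ≤ d then homogeneousComponent (d - e) p * q else 0 := by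
  let := gradedAlgebra (σ := σ) (R := K)
  have decompose_eq (r : MvPolynomial σ K) (i : ℕ) :
      (DirectSum.decompose (homogeneousSubmodule σ K) r i : MvPolynomial σ K) =
        homogeneousComponent i r := decomposition.decompose'_apply r i
  simp only [← decompose_eq]
  exact DirectSum.coe_decompose_mul_of_right_mem _ _ hq

theorem twistedComponent_mul {s t d : ℕ} (p : MvPolynomial σ K) {q : MvPolynomial σ K}
    (hq : q ∈ twistedPiece s t) :
    twistedComponent s d (p * q) = twistedComponent t d p * q := by
  rcases mem_twistedPiece.1 hq with rfl | ⟨hst, hq⟩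
  · simp
  unfold twistedComponent
  by_cases htd : t ≤ d
  · rw [if_pos (hst.trans htd), if_pos htd, homogeneousComponent_mul_of_isHomogeneous _ _ _ hq,
      if_pos (by omega), show d - s - (t - s) = d - t by omega]
  · rw [if_neg htd]
    split_ifs with hsd
    · rw [homogeneousComponent_mul_of_isHomogeneous _ _ _ hq, if_neg (by omega)]
      simp
    · simp

theorem mul_mem_twistedPiece {s t d : ℕ} {p q : MvPolynomial σ K} (hp : p ∈ twistedPiece t d)
    (hq : q ∈ twistedPiece s t) : p * q ∈ twistedPiece s d := by
  rw [← twistedComponent_of_mem hp, ← twistedComponent_mul p hq]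
  exact twistedComponent_mem _ _ _

/-- The degree `d` piece of the graded free module `⊕ j, R(-s j)`. -/
noncomputable def freePiece {ι : Type} (s : ι → ℕ) (d : ℕ) : AddSubgroup (ι → MvPolynomial σ K) :=
  AddSubgroup.pi Set.univ fun j => twistedPiece (s j) d

theorem mem_freePiece {ι : Type} {s : ι → ℕ} {d : ℕ} {x : ι → MvPolynomial σ K} :
    x ∈ freePiece s d ↔ ∀ j, x j ∈ twistedPiece (s j) d := by
  simp [freePiece, AddSubgroup.mem_pi]

theorem apply_eq_sum_smul_single {R M ι : Type} [CommRing R] [AddCommGroup M] [Module R M]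
    [Fintype ι] [DecidableEq ι] (f : (ι → R) →ₗ[R] M) (x : ι → R) :
    f x = ∑ k, x k • f (Pi.single k 1) := by
  conv_lhs => rw [pi_eq_sum_univ' x]
  simp only [map_sum, map_smul]

theorem twistedComponent_apply {ι : Type} [Finite ι] [DecidableEq ι] {s : ι → ℕ} {t : ℕ}
    {f : (ι → MvPolynomial σ K) →ₗ[MvPolynomial σ K] MvPolynomial σ K}
    (hf : ∀ k, f (Pi.single k 1) ∈ twistedPiece t (s k)) (d : ℕ) (x : ι → MvPolynomial σ K) :
    twistedComponent t d (f x) = f fun k => twistedComponent (s k) d (x k) := by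
  cases nonempty_fintype ι
  rw [apply_eq_sum_smul_single f x, apply_eq_sum_smul_single f, map_sum]
  exact Finset.sum_congr rfl fun k _ => twistedComponent_mul _ (hf k)

end GradedFree

section Resolution

variable {σ K : Type} [CommRing K] {M N : Type} [AddCommGroup M] [Module (MvPolynomial σ K) M]
  [AddCommGroup N] [Module (MvPolynomial σ K) N] {gM : ℕ → AddSubgroup M} {gN : ℕ → AddSubgroup N}

/-- The family `gM` of candidate graded pieces of the `K[σ]`-module `M` is stable under
multiplication by homogeneous polynomials. -/
def IsGradedFamily (σ K : Type) [CommRing K] {M : Type} [AddCommGroup M]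
    [Module (MvPolynomial σ K) M] (gM : ℕ → AddSubgroup M) : Prop :=
  ∀ ⦃t d : ℕ⦄ ⦃p : MvPolynomial σ K⦄ ⦃b : M⦄, p ∈ twistedPiece t d → b ∈ gM t → p • b ∈ gM d

/-- The grading that a submodule inherits from its ambient module. -/
noncomputable def inducedPiece (gM : ℕ → AddSubgroup M) (Z : Submodule (MvPolynomial σ K) M)
    (d : ℕ) : AddSubgroup Z :=
  (gM d).comap Z.subtype.toAddMonoidHom

theorem mem_inducedPiece {Z : Submodule (MvPolynomial σ K) M} {d : ℕ} {x : Z} :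
    x ∈ inducedPiece gM Z d ↔ x.1 ∈ gM d :=
  Iff.rfl

theorem isGradedFamily_freePiece {ι : Type} (s : ι → ℕ) :
    IsGradedFamily σ K (freePiece (σ := σ) (K := K) s) := fun _ _ _ _ hp hb =>
  mem_freePiece.2 fun j => mul_mem_twistedPiece hp (mem_freePiece.1 hb j)

theorem IsGradedFamily.induced (hM : IsGradedFamily σ K gM) (Z : Submodule (MvPolynomial σ K) M) :
    IsGradedFamily σ K (inducedPiece gM Z) := fun _ _ _ _ hp hb => hM hp hb

theorem IsGradedFamily.apply_mem (hM : IsGradedFamily σ K gM) {ι : Type} [Finite ι]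
    [DecidableEq ι] {s : ι → ℕ} {ε : (ι → MvPolynomial σ K) →ₗ[MvPolynomial σ K] M}
    (hε : ∀ j, ε (Pi.single j 1) ∈ gM (s j)) {d : ℕ} {w : ι → MvPolynomial σ K}
    (hw : w ∈ freePiece s d) : ε w ∈ gM d := by
  cases nonempty_fintype ι
  rw [apply_eq_sum_smul_single]
  exact sum_mem fun j _ => hM (mem_freePiece.1 hw j) (hε j)

/-- `ε` is a degree-preserving surjection from `⊕ j, R(-s j)` onto the graded module `M`, and it is
surjective in each degree. -/
structure IsGradedCover {ι : Type} [DecidableEq ι] (s : ι → ℕ) (gM : ℕ → AddSubgroup M)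
    (ε : (ι → MvPolynomial σ K) →ₗ[MvPolynomial σ K] M) : Prop where
  single_mem : ∀ j, ε (Pi.single j 1) ∈ gM (s j)
  surjective : Function.Surjective ε
  exists_lift : ∀ ⦃d a⦄, a ∈ gM d → ∃ w ∈ freePiece s d, ε w = a

theorem IsGradedCover.comp {ι : Type} [DecidableEq ι] {s : ι → ℕ}
    {ε : (ι → MvPolynomial σ K) →ₗ[MvPolynomial σ K] M} (hε : IsGradedCover s gM ε)
    {g : M →ₗ[MvPolynomial σ K] N} (hg : Function.Surjective g)
    (hgN : ∀ ⦃d b⦄, b ∈ gM d → g b ∈ gN d) (hlift : ∀ ⦃d c⦄, c ∈ gN d → ∃ b ∈ gM d, g b = c) :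
    IsGradedCover s gN (g ∘ₗ ε) where
  single_mem j := hgN (hε.single_mem j)
  surjective := hg.comp hε.surjective
  exists_lift d c hc := by
    obtain ⟨b, hb, rfl⟩ := hlift hc
    obtain ⟨w, hw, rfl⟩ := hε.exists_lift hb
    exact ⟨w, hw, rfl⟩

/-- The graded module `M` has a graded free resolution of length less than `ℓ` by finite free
modules whose `i`-th twists are at most `c + i`. -/
def HasBoundedRes (σ K : Type) [CommRing K] : ℕ → ℕ → (M : Type) → [AddCommGroup M] →
    [Module (MvPolynomial σ K) M] → (ℕ → AddSubgroup M) → Prop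
  | 0, _, M, _, _, _ => Subsingleton M
  | ℓ + 1, c, M, _, _, gM => ∃ (m : ℕ) (s : Fin m → ℕ)
      (ε : (Fin m → MvPolynomial σ K) →ₗ[MvPolynomial σ K] M),
      (∀ j, s j ≤ c) ∧ IsGradedCover s gM ε ∧
      HasBoundedRes σ K ℓ (c + 1) (LinearMap.ker ε) (inducedPiece (freePiece s) (LinearMap.ker ε))

namespace HasBoundedRes

variable {ℓ ℓ' c c' : ℕ}

theorem congr (e : M ≃ₗ[MvPolynomial σ K] N) (he : ∀ d x, e x ∈ gN d ↔ x ∈ gM d)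
    (h : HasBoundedRes σ K ℓ c M gM) : HasBoundedRes σ K ℓ c N gN := by
  cases ℓ with
  | zero =>
    have : Subsingleton M := h
    exact e.symm.injective.subsingleton
  | succ ℓ =>
    obtain ⟨m, s, ε, hs, hε, hker⟩ := h
    refine ⟨m, s, e.toLinearMap ∘ₗ ε, hs, hε.comp e.surjective (fun d b => (he d b).2) ?_, ?_⟩
    · exact fun d c hc => ⟨e.symm c, (he _ _).1 (by simpa using hc), by simp⟩
    · have ker_eq : LinearMap.ker (e.toLinearMap ∘ₗ ε) = LinearMap.ker ε := by
        ext
        simp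
      rwa [ker_eq]

theorem mono_bound (hc : c ≤ c') (h : HasBoundedRes σ K ℓ c M gM) :
    HasBoundedRes σ K ℓ c' M gM := by
  induction ℓ generalizing c c' M with
  | zero => exact h
  | succ ℓ ih =>
    obtain ⟨m, s, ε, hs, hε, hker⟩ := h
    exact ⟨m, s, ε, fun j => (hs j).trans hc, hε, ih (by omega) hker⟩

theorem succ (h : HasBoundedRes σ K ℓ c M gM) : HasBoundedRes σ K (ℓ + 1) c M gM := by
  induction ℓ generalizing c M with
  | zero =>
    have : Subsingleton M := h
    refine ⟨0, Fin.elim0, 0, fun j => j.elim0, ⟨fun j => j.elim0, ?_, ?_⟩, ?_⟩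
    · exact fun x => ⟨0, Subsingleton.elim _ _⟩
    · exact fun d a _ => ⟨0, zero_mem _, Subsingleton.elim _ _⟩
    · exact inferInstanceAs (Subsingleton (LinearMap.ker _))
  | succ ℓ ih =>
    obtain ⟨m, s, ε, hs, hε, hker⟩ := h
    exact ⟨m, s, ε, hs, hε, ih hker⟩

theorem mono_length (hℓ : ℓ ≤ ℓ') (h : HasBoundedRes σ K ℓ c M gM) :
    HasBoundedRes σ K ℓ' c M gM := by
  induction hℓ with
  | refl => exact h
  | step _ ih => exact ih.succ

theorem of_cover {ι : Type} [Finite ι] [DecidableEq ι] {s : ι → ℕ}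
    {ε : (ι → MvPolynomial σ K) →ₗ[MvPolynomial σ K] M} (hs : ∀ j, s j ≤ c)
    (hε : IsGradedCover s gM ε)
    (hker : HasBoundedRes σ K ℓ (c + 1) (LinearMap.ker ε)
      (inducedPiece (freePiece s) (LinearMap.ker ε))) : HasBoundedRes σ K (ℓ + 1) c M gM := by
  let e := Finite.equivFin ι
  let E := LinearEquiv.funCongrLeft (MvPolynomial σ K) (MvPolynomial σ K) e
  have mem_iff (d : ℕ) (x : Fin (Nat.card ι) → MvPolynomial σ K) :
      E x ∈ freePiece s d ↔ x ∈ freePiece (s ∘ e.symm) d := by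
    simp only [mem_freePiece]
    exact e.forall_congr fun i => by simp [E, LinearMap.funLeft_apply]
  refine ⟨Nat.card ι, s ∘ e.symm, ε ∘ₗ E.toLinearMap, fun j => hs _,
    ⟨fun j => ?_, hε.surjective.comp E.surjective, fun d a ha => ?_⟩, ?_⟩
  · have single_eq : E (Pi.single j 1) = Pi.single (e.symm j) 1 := Pi.single_comp_equiv e j 1
    simpa [single_eq] using hε.single_mem (e.symm j)
  · obtain ⟨w, hw, rfl⟩ := hε.exists_lift ha
    exact ⟨E.symm w, (mem_iff _ _).1 (by simpa using hw), by simp⟩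
  · refine hker.congr (E.ofSubmodule' (LinearMap.ker ε)).symm fun d x => ?_
    rw [mem_inducedPiece, mem_inducedPiece]
    exact (mem_iff d (E.symm x)).symm.trans (by rw [E.apply_symm_apply])

end HasBoundedRes

end Resolution

section RegR

variable {n : ℕ} {K : Type} [Field K] {I : Ideal (MvPolynomial (Fin n) K)}

/-- The degree `d` piece of `R/I`. -/
noncomputable def quotientPiece {σ K : Type} [CommRing K] (I : Ideal (MvPolynomial σ K)) (d : ℕ) :
    AddSubgroup (MvPolynomial σ K ⧸ I) :=
  (twistedPiece 0 d).map (Ideal.Quotient.mk I).toAddMonoidHom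

theorem isGradedFamily_quotientPiece {σ K : Type} [CommRing K] (I : Ideal (MvPolynomial σ K)) :
    IsGradedFamily σ K (quotientPiece I) := by
  rintro t d p _ hp ⟨q, hq, rfl⟩
  exact ⟨p * q, mul_mem_twistedPiece hp hq, map_mul (Ideal.Quotient.mk I) p q⟩

theorem isGradedCover_rangeRestrict_δ (F : GFR n K I) (i : ℕ) :
    IsGradedCover (F.tw (i + 1)) (inducedPiece (freePiece (F.tw i)) (LinearMap.range (F.δ i)))
      (F.δ i).rangeRestrict where
  single_mem k := mem_freePiece.2 fun j => mem_twistedPiece.2 (F.δ_homog i k j)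
  surjective := LinearMap.surjective_rangeRestrict _
  exists_lift := by
    rintro d ⟨_, x, rfl⟩ ha
    refine ⟨fun k => twistedComponent (F.tw (i + 1) k) d (x k),
      mem_freePiece.2 fun _ => twistedComponent_mem _ _ _, Subtype.ext (funext fun j => ?_)⟩
    have component_apply := twistedComponent_apply (f := LinearMap.proj j ∘ₗ F.δ i)
      (fun k => mem_twistedPiece.2 (F.δ_homog i k j)) d x
    exact component_apply.symm.trans (twistedComponent_of_mem (mem_freePiece.1 ha j))

theorem isGradedCover_mkQ_comp_aug (hI : ∀ p ∈ I, ∀ d, homogeneousComponent d p ∈ I)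
    (F : GFR n K I) : IsGradedCover (F.tw 0) (quotientPiece I) (Submodule.mkQ I ∘ₗ F.aug) where
  single_mem j := ⟨_, mem_twistedPiece_zero.2 (F.aug_homog j), rfl⟩
  surjective a := by
    obtain ⟨a, rfl⟩ := Ideal.Quotient.mk_surjective a
    obtain ⟨x, hx⟩ := F.aug_surj a
    exact ⟨x, (Ideal.Quotient.eq.2 hx).symm⟩
  exists_lift := by
    rintro d _ ⟨p, hp, rfl⟩
    obtain ⟨x, hx⟩ := F.aug_surj p
    refine ⟨fun k => twistedComponent (F.tw 0 k) d (x k),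
      mem_freePiece.2 fun _ => twistedComponent_mem _ _ _, (Ideal.Quotient.eq.2 ?_).symm⟩
    rw [← twistedComponent_apply (fun k => mem_twistedPiece_zero.2 (F.aug_homog k)),
      ← twistedComponent_of_mem hp, ← map_sub]
    exact twistedComponent_mem_of_mem hI hx 0 d

theorem hasBoundedRes_range_δ (F : GFR n K I) {r : ℕ} (hr : ∀ i j, F.tw i j ≤ r + i) {ℓ i : ℕ}
    (hi : F.len < i + ℓ) :
    HasBoundedRes (Fin n) K ℓ (r + i + 1) (LinearMap.range (F.δ i))
      (inducedPiece (freePiece (F.tw i)) (LinearMap.range (F.δ i))) := by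
  induction ℓ generalizing i with
  | zero =>
    have : IsEmpty (Fin (F.rk i)) := by
      rw [F.rk_zero i (by omega)]
      infer_instance
    exact inferInstanceAs (Subsingleton (LinearMap.range _))
  | succ ℓ ih =>
    refine ⟨_, _, _, fun j => (hr (i + 1) j).trans_eq (by ring),
      isGradedCover_rangeRestrict_δ F i, ?_⟩
    rw [LinearMap.ker_rangeRestrict, ← F.exact_succ]
    exact ih (i := i + 1) (by omega)

theorem exists_hasBoundedRes_of_GFR (hI : ∀ p ∈ I, ∀ d, homogeneousComponent d p ∈ I)
    (F : GFR n K I) {r : ℕ} (hr : ∀ i j, F.tw i j ≤ r + i) :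
    ∃ ℓ, HasBoundedRes (Fin n) K ℓ r (MvPolynomial (Fin n) K ⧸ I) (quotientPiece I) := by
  refine ⟨F.len + 1 + 1, _, _, _, hr 0, isGradedCover_mkQ_comp_aug hI F, ?_⟩
  rw [LinearMap.ker_comp, Submodule.ker_mkQ, ← F.exact_zero]
  exact hasBoundedRes_range_δ F hr (i := 0) (by omega)

/-- A graded free resolution of `M`, given by matrices as in `GFR`, of length less than `ℓ` and with
`i`-th twists at most `c + i`. -/
structure BoundedResolution {σ K : Type} [CommRing K] (ℓ c : ℕ) {M : Type} [AddCommGroup M]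
    [Module (MvPolynomial σ K) M] (gM : ℕ → AddSubgroup M) where
  rk : ℕ → ℕ
  tw : (i : ℕ) → Fin (rk i) → ℕ
  δ : (i : ℕ) → (Fin (rk (i + 1)) → MvPolynomial σ K) →ₗ[MvPolynomial σ K]
    (Fin (rk i) → MvPolynomial σ K)
  ε : (Fin (rk 0) → MvPolynomial σ K) →ₗ[MvPolynomial σ K] M
  rk_eq_zero : ∀ i, ℓ ≤ i → rk i = 0
  tw_le : ∀ i j, tw i j ≤ c + i
  δ_single_mem : ∀ i k j, δ i (Pi.single k 1) j ∈ twistedPiece (tw i j) (tw (i + 1) k)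
  ε_single_mem : ∀ j, ε (Pi.single j 1) ∈ gM (tw 0 j)
  ε_surjective : Function.Surjective ε
  exact_zero : LinearMap.range (δ 0) = LinearMap.ker ε
  exact_succ : ∀ i, LinearMap.range (δ (i + 1)) = LinearMap.ker (δ i)

namespace BoundedResolution

variable {σ K : Type} [CommRing K] {ℓ c : ℕ} {M : Type} [AddCommGroup M]
  [Module (MvPolynomial σ K) M] {gM : ℕ → AddSubgroup M}

/-- The zero resolution of a zero module. -/
noncomputable def ofSubsingleton [Subsingleton M] : BoundedResolution (σ := σ) (K := K) ℓ c gM where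
  rk _ := 0
  tw _ j := j.elim0
  δ _ := 0
  ε := 0
  rk_eq_zero _ _ := rfl
  tw_le _ j := j.elim0
  δ_single_mem _ k := k.elim0
  ε_single_mem j := j.elim0
  ε_surjective _ := ⟨0, Subsingleton.elim _ _⟩
  exact_zero := Subsingleton.elim _ _
  exact_succ _ := Subsingleton.elim _ _

/-- Splices a graded cover of `M` with a resolution of its kernel. -/
noncomputable def cons {m : ℕ} {s : Fin m → ℕ}
    {ε : (Fin m → MvPolynomial σ K) →ₗ[MvPolynomial σ K] M}
    (hs : ∀ j, s j ≤ c) (hε : IsGradedCover s gM ε)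
    (F : BoundedResolution (σ := σ) (K := K) ℓ (c + 1)
      (inducedPiece (freePiece s) (LinearMap.ker ε))) :
    BoundedResolution (σ := σ) (K := K) (ℓ + 1) c gM where
  rk
    | 0 => m
    | i + 1 => F.rk i
  tw
    | 0 => s
    | i + 1 => F.tw i
  δ
    | 0 => (LinearMap.ker ε).subtype ∘ₗ F.ε
    | i + 1 => F.δ i
  ε := ε
  rk_eq_zero
    | 0, h => by omega
    | i + 1, h => F.rk_eq_zero i (by omega)
  tw_le
    | 0 => hs
    | i + 1 => fun j => (F.tw_le i j).trans_eq (by ring)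
  δ_single_mem
    | 0 => fun k => mem_freePiece.1 (mem_inducedPiece.1 (F.ε_single_mem k))
    | i + 1 => F.δ_single_mem i
  ε_single_mem := hε.single_mem
  ε_surjective := hε.surjective
  exact_zero := by
    rw [LinearMap.range_comp, LinearMap.range_eq_top.2 F.ε_surjective, Submodule.map_top,
      Submodule.range_subtype]
  exact_succ
    | 0 => F.exact_zero.trans
      (by rw [LinearMap.ker_comp, Submodule.ker_subtype, Submodule.comap_bot])
    | i + 1 => F.exact_succ i

theorem nonempty_of_hasBoundedRes (h : HasBoundedRes σ K ℓ c M gM) :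
    Nonempty (BoundedResolution (σ := σ) (K := K) ℓ c gM) := by
  induction ℓ generalizing c M with
  | zero =>
    have : Subsingleton M := h
    exact ⟨ofSubsingleton⟩
  | succ ℓ ih =>
    obtain ⟨m, s, ε, hs, hε, hker⟩ := h
    exact (ih hker).map (cons hs hε)

end BoundedResolution

theorem exists_GFR_of_hasBoundedRes {ℓ c : ℕ}
    (h : HasBoundedRes (Fin n) K ℓ c (MvPolynomial (Fin n) K ⧸ I) (quotientPiece I)) :
    ∃ F : GFR n K I, ∀ i j, F.tw i j ≤ c + i := by
  obtain ⟨F⟩ := BoundedResolution.nonempty_of_hasBoundedRes h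
  choose q hq mk_q using F.ε_single_mem
  let aug := Fintype.linearCombination (MvPolynomial (Fin n) K) q
  have aug_single (j) : aug (Pi.single j 1) = q j := by
    simp [aug, Fintype.linearCombination_apply_single]
  have mkQ_comp_aug : Submodule.mkQ I ∘ₗ aug = F.ε :=
    LinearMap.pi_ext' fun j => LinearMap.ext_ring ((congrArg _ (aug_single j)).trans (mk_q j))
  refine ⟨⟨ℓ, F.rk, fun i hi => F.rk_eq_zero i hi.le, F.tw, F.δ,
    fun i k j => mem_twistedPiece.1 (F.δ_single_mem i k j), aug, fun j => ?_, fun r => ?_, ?_,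
    F.exact_succ⟩, F.tw_le⟩
  · exact aug_single j ▸ mem_twistedPiece_zero.1 (hq j)
  · obtain ⟨x, hx⟩ := F.ε_surjective (Ideal.Quotient.mk I r)
    rw [← mkQ_comp_aug] at hx
    exact ⟨x, Ideal.Quotient.eq.1 hx.symm⟩
  · rw [F.exact_zero, ← mkQ_comp_aug, LinearMap.ker_comp, Submodule.ker_mkQ]

end RegR

/-! ### Resolutions in short exact sequences -/

section ShortExact

variable {σ K : Type} [CommRing K] {A B C : Type}
  [AddCommGroup A] [Module (MvPolynomial σ K) A] [AddCommGroup B] [Module (MvPolynomial σ K) B]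
  [AddCommGroup C] [Module (MvPolynomial σ K) C] {f : A →ₗ[MvPolynomial σ K] B}
  {g : B →ₗ[MvPolynomial σ K] C} {gA : ℕ → AddSubgroup A} {gB : ℕ → AddSubgroup B}
  {gC : ℕ → AddSubgroup C}

/-- `0 → A → B → C → 0` is a short exact sequence of graded modules, exact in each degree. -/
structure IsGradedShortExact (f : A →ₗ[MvPolynomial σ K] B) (g : B →ₗ[MvPolynomial σ K] C)
    (gA : ℕ → AddSubgroup A) (gB : ℕ → AddSubgroup B) (gC : ℕ → AddSubgroup C) : Prop where
  injective : Function.Injective f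
  exact : Function.Exact f g
  surjective : Function.Surjective g
  map_mem_iff : ∀ d a, f a ∈ gB d ↔ a ∈ gA d
  map_mem : ∀ ⦃d b⦄, b ∈ gB d → g b ∈ gC d
  exists_lift : ∀ ⦃d c⦄, c ∈ gC d → ∃ b ∈ gB d, g b = c
  isGradedFamily : IsGradedFamily σ K gB

/-- The horseshoe map `F ⊕ F' → B`, built from a map `F → A → B` and a lift `β : F' → B` of a map
`F' → C`, for free modules `F` and `F'`. -/
noncomputable def horseshoeMap {ι ι' : Type} (f : A →ₗ[MvPolynomial σ K] B)
    (εA : (ι → MvPolynomial σ K) →ₗ[MvPolynomial σ K] A)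
    (β : (ι' → MvPolynomial σ K) →ₗ[MvPolynomial σ K] B) :
    (ι ⊕ ι' → MvPolynomial σ K) →ₗ[MvPolynomial σ K] B :=
  f ∘ₗ εA ∘ₗ LinearMap.funLeft _ _ Sum.inl + β ∘ₗ LinearMap.funLeft _ _ Sum.inr

@[simp]
theorem horseshoeMap_elim {ι ι' : Type} (εA : (ι → MvPolynomial σ K) →ₗ[MvPolynomial σ K] A)
    (β : (ι' → MvPolynomial σ K) →ₗ[MvPolynomial σ K] B) (x : ι → MvPolynomial σ K)
    (y : ι' → MvPolynomial σ K) : horseshoeMap f εA β (Sum.elim x y) = f (εA x) + β y :=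
  rfl

theorem elim_mem_freePiece {ι ι' : Type} {s : ι → ℕ} {s' : ι' → ℕ} {d : ℕ}
    {x : ι → MvPolynomial σ K} {y : ι' → MvPolynomial σ K} :
    Sum.elim x y ∈ freePiece (Sum.elim s s') d ↔ x ∈ freePiece s d ∧ y ∈ freePiece s' d := by
  simp [mem_freePiece]

namespace IsGradedShortExact

theorem apply_horseshoeMap {ι ι' : Type} (S : IsGradedShortExact f g gA gB gC)
    (εA : (ι → MvPolynomial σ K) →ₗ[MvPolynomial σ K] A)
    (β : (ι' → MvPolynomial σ K) →ₗ[MvPolynomial σ K] B)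
    (z : ι ⊕ ι' → MvPolynomial σ K) : g (horseshoeMap f εA β z) = g (β (z ∘ Sum.inr)) := by
  rw [← Sum.elim_comp_inl_inr z, horseshoeMap_elim, map_add, S.exact.apply_apply_eq_zero,
    zero_add, Sum.elim_comp_inr]

section Horseshoe

variable {ι ι' : Type} [DecidableEq ι] [DecidableEq ι'] {s : ι → ℕ} {s' : ι' → ℕ}
  {εA : (ι → MvPolynomial σ K) →ₗ[MvPolynomial σ K] A}
  {β : (ι' → MvPolynomial σ K) →ₗ[MvPolynomial σ K] B}

theorem exists_preimage (S : IsGradedShortExact f g gA gB gC) (hA : IsGradedCover s gA εA) {b : B}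
    (hb : g b = 0) : ∃ x, f (εA x) = b := by
  obtain ⟨a, rfl⟩ := (S.exact b).1 hb
  obtain ⟨x, rfl⟩ := hA.surjective a
  exact ⟨x, rfl⟩

theorem exists_preimage_mem (S : IsGradedShortExact f g gA gB gC) (hA : IsGradedCover s gA εA)
    {d : ℕ} {b : B} (hbd : b ∈ gB d) (hb : g b = 0) : ∃ x ∈ freePiece s d, f (εA x) = b := by
  obtain ⟨a, rfl⟩ := (S.exact b).1 hb
  obtain ⟨x, hx, rfl⟩ := hA.exists_lift ((S.map_mem_iff d a).1 hbd)
  exact ⟨x, hx, rfl⟩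

theorem exists_lift_cover [Finite ι'] (S : IsGradedShortExact f g gA gB gC)
    {εC : (ι' → MvPolynomial σ K) →ₗ[MvPolynomial σ K] C} (hC : IsGradedCover s' gC εC) :
    ∃ β : (ι' → MvPolynomial σ K) →ₗ[MvPolynomial σ K] B,
      g ∘ₗ β = εC ∧ ∀ j, β (Pi.single j 1) ∈ gB (s' j) := by
  cases nonempty_fintype ι'
  choose b hb g_b using fun j => S.exists_lift (hC.single_mem j)
  have single_eq (j) : Fintype.linearCombination (MvPolynomial σ K) b (Pi.single j 1) = b j := by
    simp [Fintype.linearCombination_apply_single]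
  refine ⟨Fintype.linearCombination _ b, LinearMap.pi_ext' fun j => LinearMap.ext_ring ?_,
    fun j => (single_eq j).symm ▸ hb j⟩
  exact (congrArg g (single_eq j)).trans (g_b j)

theorem horseshoe_cover [Finite ι'] (S : IsGradedShortExact f g gA gB gC)
    (hA : IsGradedCover s gA εA) (hC : IsGradedCover s' gC (g ∘ₗ β))
    (hβ : ∀ j, β (Pi.single j 1) ∈ gB (s' j)) :
    IsGradedCover (Sum.elim s s') gB (horseshoeMap f εA β) where
  single_mem := by
    rintro (j | j)
    · rw [← Sum.elim_single_zero, horseshoeMap_elim, map_zero, add_zero]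
      exact (S.map_mem_iff _ _).2 (hA.single_mem j)
    · rw [← Sum.elim_zero_single, horseshoeMap_elim, map_zero, map_zero, zero_add]
      exact hβ j
  surjective b := by
    obtain ⟨y, hy⟩ := hC.surjective (g b)
    obtain ⟨x, hx⟩ := S.exists_preimage hA (b := b - β y)
      (by rw [map_sub, sub_eq_zero]; exact hy.symm)
    exact ⟨Sum.elim x y, by rw [horseshoeMap_elim, hx, sub_add_cancel]⟩
  exists_lift d b hb := by
    obtain ⟨y, hyd, hy⟩ := hC.exists_lift (S.map_mem hb)
    obtain ⟨x, hxd, hx⟩ := S.exists_preimage_mem hA (b := b - β y)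
      (sub_mem hb (S.isGradedFamily.apply_mem hβ hyd)) (by rw [map_sub, sub_eq_zero]; exact hy.symm)
    exact ⟨Sum.elim x y, elim_mem_freePiece.2 ⟨hxd, hyd⟩,
      by rw [horseshoeMap_elim, hx, sub_add_cancel]⟩

theorem exists_horseshoe_kernel [Finite ι'] (S : IsGradedShortExact f g gA gB gC)
    (hA : IsGradedCover s gA εA) (hβ : ∀ j, β (Pi.single j 1) ∈ gB (s' j)) :
    ∃ (F : LinearMap.ker εA →ₗ[MvPolynomial σ K] LinearMap.ker (horseshoeMap f εA β))
      (G : LinearMap.ker (horseshoeMap f εA β) →ₗ[MvPolynomial σ K] LinearMap.ker (g ∘ₗ β)),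
      IsGradedShortExact F G (inducedPiece (freePiece s) _)
        (inducedPiece (freePiece (Sum.elim s s')) _) (inducedPiece (freePiece s') _) := by
  have elim_neg_mem {x y} (h : f (εA x) = β y) :
      Sum.elim (-x) y ∈ LinearMap.ker (horseshoeMap f εA β) := by
    simp [h]
  refine ⟨(LinearEquiv.sumArrowLequivProdArrow ι ι' (MvPolynomial σ K) _).symm.toLinearMap.comp
      (LinearMap.inl _ _ _) |>.restrict fun x (hx : εA x = 0) => ?_,
    (LinearMap.funLeft _ _ Sum.inr).restrict fun z (hz : horseshoeMap f εA β z = 0) => ?_,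
    fun x y hxy => ?_, fun z => ⟨fun hz => ?_, ?_⟩, fun y => ?_, fun d x => ?_, fun d z hz => ?_,
    fun d y hyd => ?_, (isGradedFamily_freePiece _).induced _⟩
  · change horseshoeMap f εA β (Sum.elim x 0) = 0
    simp [hx]
  · change g (β (z ∘ Sum.inr)) = 0
    rw [← S.apply_horseshoeMap εA β, hz, map_zero]
  · exact Subtype.ext (funext fun j => congrFun (congrArg Subtype.val hxy) (Sum.inl j))
  · have elim_eq : Sum.elim (z.1 ∘ Sum.inl) 0 = z.1 := by
      rw [← show z.1 ∘ Sum.inr = 0 from congrArg Subtype.val hz, Sum.elim_comp_inl_inr]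
    have apply_inl : f (εA (z.1 ∘ Sum.inl)) = 0 := by
      have hz' : horseshoeMap f εA β (Sum.elim (z.1 ∘ Sum.inl) 0) = 0 := by
        rw [elim_eq]
        exact z.2
      rwa [horseshoeMap_elim, map_zero, add_zero] at hz'
    exact ⟨⟨_, (map_eq_zero_iff f S.injective).1 apply_inl⟩, Subtype.ext elim_eq⟩
  · rintro ⟨x, rfl⟩
    exact Subtype.ext rfl
  · obtain ⟨x, hx⟩ := S.exists_preimage hA y.2
    exact ⟨⟨_, elim_neg_mem hx⟩, rfl⟩
  · exact elim_mem_freePiece.trans (and_iff_left (zero_mem _))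
  · exact mem_freePiece.2 fun j => mem_freePiece.1 hz (Sum.inr j)
  · obtain ⟨x, hxd, hx⟩ := S.exists_preimage_mem hA (S.isGradedFamily.apply_mem hβ hyd) y.2
    exact ⟨⟨_, elim_neg_mem hx⟩, elim_mem_freePiece.2 ⟨neg_mem hxd, hyd⟩, rfl⟩

end Horseshoe

theorem hasBoundedRes_middle {ℓ c : ℕ} (S : IsGradedShortExact f g gA gB gC)
    (hA : HasBoundedRes σ K ℓ c A gA) (hC : HasBoundedRes σ K ℓ c C gC) :
    HasBoundedRes σ K ℓ c B gB := by
  induction ℓ generalizing c A B C with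
  | zero =>
    have : Subsingleton A := hA
    have : Subsingleton C := hC
    exact ⟨fun b b' => by
      obtain ⟨a, ha⟩ := (S.exact (b - b')).1 (Subsingleton.elim _ _)
      rw [← sub_eq_zero, ← ha, Subsingleton.elim a 0, map_zero]⟩
  | succ ℓ ih =>
    obtain ⟨m, s, εA, hs, hεA, hkerA⟩ := hA
    obtain ⟨m', s', εC, hs', hεC, hkerC⟩ := hC
    obtain ⟨β, rfl, hβ⟩ := S.exists_lift_cover hεC
    obtain ⟨F, G, S'⟩ := S.exists_horseshoe_kernel hεA hβ
    exact .of_cover (Sum.forall.2 ⟨hs, hs'⟩) (S.horseshoe_cover hεA hεC hβ) (ih S' hkerA hkerC)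

theorem exists_mapping_cone_kernel {ι : Type} [Finite ι] [DecidableEq ι] {s : ι → ℕ}
    {ε : (ι → MvPolynomial σ K) →ₗ[MvPolynomial σ K] B} (S : IsGradedShortExact f g gA gB gC)
    (hε : IsGradedCover s gB ε) :
    ∃ (F : LinearMap.ker ε →ₗ[MvPolynomial σ K] LinearMap.ker (g ∘ₗ ε))
      (G : LinearMap.ker (g ∘ₗ ε) →ₗ[MvPolynomial σ K] A),
      IsGradedShortExact F G (inducedPiece (freePiece s) _) (inducedPiece (freePiece s) _) gA := by
  have range_le (x : LinearMap.ker (g ∘ₗ ε)) : ε x.1 ∈ LinearMap.range f := (S.exact _).1 x.2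
  let G := (LinearEquiv.ofInjective f S.injective).symm.toLinearMap ∘ₗ
    (ε ∘ₗ (LinearMap.ker (g ∘ₗ ε)).subtype).codRestrict (LinearMap.range f) range_le
  have f_G (x) : f (G x) = ε x.1 :=
    congrArg Subtype.val ((LinearEquiv.ofInjective f S.injective).apply_symm_apply _)
  have mem_ker {w a} (hw : ε w = f a) : w ∈ LinearMap.ker (g ∘ₗ ε) := by
    simp [hw, S.exact.apply_apply_eq_zero]
  refine ⟨Submodule.inclusion (LinearMap.ker_le_ker_comp ε g), G,
    Submodule.inclusion_injective _, fun x => ?_, fun a => ?_, fun _ _ => Iff.rfl,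
    fun d x hx => ?_, fun d a ha => ?_, (isGradedFamily_freePiece s).induced _⟩
  · rw [← map_eq_zero_iff f S.injective, f_G]
    exact ⟨fun hx => ⟨⟨x.1, hx⟩, rfl⟩, by rintro ⟨y, rfl⟩; exact y.2⟩
  · obtain ⟨w, hw⟩ := hε.surjective (f a)
    exact ⟨⟨w, mem_ker hw⟩, S.injective ((f_G _).trans hw)⟩
  · rw [← S.map_mem_iff, f_G]
    exact S.isGradedFamily.apply_mem hε.single_mem hx
  · obtain ⟨w, hwd, hw⟩ := hε.exists_lift ((S.map_mem_iff d a).2 ha)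
    exact ⟨⟨w, mem_ker hw⟩, hwd, S.injective ((f_G _).trans hw)⟩

theorem hasBoundedRes_right {ℓ c : ℕ} (S : IsGradedShortExact f g gA gB gC)
    (hA : HasBoundedRes σ K ℓ (c + 1) A gA) (hB : HasBoundedRes σ K (ℓ + 1) c B gB) :
    HasBoundedRes σ K (ℓ + 1) c C gC := by
  obtain ⟨m, s, ε, hs, hε, hker⟩ := hB
  obtain ⟨F, G, S'⟩ := S.exists_mapping_cone_kernel hε
  exact ⟨m, s, g ∘ₗ ε, hs, hε.comp S.surjective S.map_mem S.exists_lift,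
    S'.hasBoundedRes_middle hker hA⟩

end IsGradedShortExact

/-- The grading of the twist `M(-1)`. -/
def shiftPiece {M : Type} [AddCommGroup M] (gM : ℕ → AddSubgroup M) : ℕ → AddSubgroup M
  | 0 => ⊥
  | d + 1 => gM d

theorem freePiece_add_one {ι : Type} (s : ι → ℕ) :
    freePiece (σ := σ) (K := K) (fun j => s j + 1) = shiftPiece (freePiece s) := by
  funext d
  cases d with
  | zero =>
    ext x
    simp [mem_freePiece, mem_twistedPiece_succ_zero, shiftPiece, funext_iff]
  | succ d =>
    ext x
    simp [mem_freePiece, mem_twistedPiece_succ_succ, shiftPiece]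

theorem inducedPiece_shiftPiece (gA : ℕ → AddSubgroup A) (Z : Submodule (MvPolynomial σ K) A) :
    inducedPiece (shiftPiece gA) Z = shiftPiece (inducedPiece gA Z) := by
  funext d
  cases d with
  | zero =>
    ext x
    simp [mem_inducedPiece, shiftPiece]
  | succ d => rfl

theorem HasBoundedRes.shift {ℓ c : ℕ} (h : HasBoundedRes σ K ℓ c A gA) :
    HasBoundedRes σ K ℓ (c + 1) A (shiftPiece gA) := by
  induction ℓ generalizing c A with
  | zero => exact h
  | succ ℓ ih =>
    obtain ⟨m, s, ε, hs, hε, hker⟩ := h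
    refine ⟨m, fun j => s j + 1, ε, fun j => Nat.succ_le_succ (hs j),
      ⟨hε.single_mem, hε.surjective, fun d a ha => ?_⟩, ?_⟩
    · rw [freePiece_add_one]
      cases d with
      | zero => exact ⟨0, zero_mem _, (map_zero ε).trans (AddSubgroup.mem_bot.1 ha).symm⟩
      | succ d => exact hε.exists_lift ha
    · rw [freePiece_add_one, inducedPiece_shiftPiece]
      exact ih hker

end ShortExact

/-! ### Regularity of monomial ideals -/

section Colon

variable {σ K : Type} [CommRing K]

/-- Multiplication by `f`, as a map from `R ⧸ (I : f)` to `R ⧸ I`. -/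
noncomputable def colonMap {R : Type} [CommRing R] (I : Ideal R) (f : R) :
    R ⧸ I.colon {f} →ₗ[R] R ⧸ I :=
  Submodule.mapQ _ _ (LinearMap.mulRight R f) fun _ hp => Submodule.mem_colon_singleton.1 hp

theorem quotientPiece_colon {I : Ideal (MvPolynomial σ K)}
    (hI : ∀ p ∈ I, ∀ d, homogeneousComponent d p ∈ I) {f : MvPolynomial σ K}
    (hf : f.IsHomogeneous 1) (d : ℕ) (a : MvPolynomial σ K ⧸ I.colon {f}) :
    colonMap I f a ∈ quotientPiece I d ↔ a ∈ shiftPiece (quotientPiece (I.colon {f})) d := by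
  have hf' : f ∈ twistedPiece 0 1 := mem_twistedPiece_zero.2 hf
  obtain ⟨p, rfl⟩ := Ideal.Quotient.mk_surjective a
  constructor
  · rintro ⟨q, hq, hqp⟩
    have sub_mem_I : q - p * f ∈ I := Ideal.Quotient.eq.1 hqp
    have component_mem : q - twistedComponent 1 d p * f ∈ I := by
      simpa only [map_sub, twistedComponent_of_mem hq, twistedComponent_mul p hf'] using
        twistedComponent_mem_of_mem hI sub_mem_I 0 d
    have mk_eq : Ideal.Quotient.mk (I.colon {f}) p = Ideal.Quotient.mk _ (twistedComponent 1 d p) :=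
      Ideal.Quotient.eq.2 <| Submodule.mem_colon_singleton.2 <| by
        simpa [sub_mul] using sub_mem component_mem sub_mem_I
    rw [mk_eq]
    cases d with
    | zero => simp [twistedComponent]
    | succ d =>
      exact ⟨_, mem_twistedPiece_succ_succ.1 (twistedComponent_mem 1 (d + 1) p), rfl⟩
  · cases d with
    | zero =>
      intro ha
      rw [AddSubgroup.mem_bot.1 ha, map_zero]
      exact zero_mem _
    | succ d =>
      rintro ⟨q, hq, hqp⟩
      rw [← show Ideal.Quotient.mk (I.colon {f}) q = Ideal.Quotient.mk _ p from hqp]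
      exact ⟨q * f, mul_mem_twistedPiece (mem_twistedPiece_succ_succ.2 hq) hf', rfl⟩

theorem isGradedShortExact_colon {I : Ideal (MvPolynomial σ K)}
    (hI : ∀ p ∈ I, ∀ d, homogeneousComponent d p ∈ I) {f : MvPolynomial σ K}
    (hf : f.IsHomogeneous 1) :
    IsGradedShortExact (colonMap I f)
      (Submodule.factor (le_sup_left : I ≤ I ⊔ Ideal.span {f}))
      (shiftPiece (quotientPiece (I.colon {f}))) (quotientPiece I) (quotientPiece _) where
  injective := by
    rw [injective_iff_map_eq_zero]
    intro a ha
    obtain ⟨p, rfl⟩ := Ideal.Quotient.mk_surjective a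
    exact Ideal.Quotient.eq_zero_iff_mem.2
      (Submodule.mem_colon_singleton.2 (Ideal.Quotient.eq_zero_iff_mem.1 ha))
  exact b := by
    obtain ⟨p, rfl⟩ := Ideal.Quotient.mk_surjective b
    refine Ideal.Quotient.eq_zero_iff_mem.trans ⟨fun hp => ?_, ?_⟩
    · obtain ⟨r, hr, _, hq, rfl⟩ := Submodule.mem_sup.1 hp
      obtain ⟨q, rfl⟩ := Ideal.mem_span_singleton'.1 hq
      exact ⟨Ideal.Quotient.mk _ q, Ideal.Quotient.eq.2 (by simpa using neg_mem hr)⟩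
    · rintro ⟨a, ha⟩
      obtain ⟨q, rfl⟩ := Ideal.Quotient.mk_surjective a
      have sub_mem_I : q * f - p ∈ I := Ideal.Quotient.eq.1 ha
      rw [← sub_sub_cancel (q * f) p]
      exact sub_mem (Ideal.mem_sup_right (Ideal.mem_span_singleton'.2 ⟨q, rfl⟩))
        (Ideal.mem_sup_left sub_mem_I)
  surjective := Submodule.factor_surjective _
  map_mem_iff := quotientPiece_colon hI hf
  map_mem := by
    rintro d _ ⟨q, hq, rfl⟩
    exact ⟨q, hq, rfl⟩
  exists_lift := by
    rintro d _ ⟨q, hq, rfl⟩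
    exact ⟨Ideal.Quotient.mk _ q, ⟨q, hq, rfl⟩, rfl⟩
  isGradedFamily := isGradedFamily_quotientPiece I

/-- The Castelnuovo–Mumford regularity of `R/I`, where `R = K[σ]`, is at most `c`, as witnessed by a
finite graded free resolution. -/
def HasRegularityLE (I : Ideal (MvPolynomial σ K)) (c : ℕ) : Prop :=
  ∃ ℓ, HasBoundedRes σ K ℓ c (MvPolynomial σ K ⧸ I) (quotientPiece I)

namespace HasRegularityLE

variable {I : Ideal (MvPolynomial σ K)} {c c' : ℕ}

theorem mono (hc : c ≤ c') (h : HasRegularityLE I c) : HasRegularityLE I c' :=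
  h.imp fun _ hℓ => hℓ.mono_bound hc

theorem of_colon_of_sup (hI : ∀ p ∈ I, ∀ d, homogeneousComponent d p ∈ I) {f : MvPolynomial σ K}
    (hf : f.IsHomogeneous 1) (hcolon : HasRegularityLE (I.colon {f}) c)
    (hsup : HasRegularityLE (I ⊔ Ideal.span {f}) (c + 1)) : HasRegularityLE I (c + 1) := by
  obtain ⟨ℓ, hℓ⟩ := hcolon
  obtain ⟨ℓ', hℓ'⟩ := hsup
  exact ⟨max ℓ ℓ', (isGradedShortExact_colon hI hf).hasBoundedRes_middle
    (hℓ.mono_length (le_max_left _ _)).shift (hℓ'.mono_length (le_max_right _ _))⟩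

theorem sup_span_singleton (hI : ∀ p ∈ I, ∀ d, homogeneousComponent d p ∈ I)
    {f : MvPolynomial σ K} (hf : f.IsHomogeneous 1) (hcolon : I.colon {f} = I)
    (h : HasRegularityLE I c) : HasRegularityLE (I ⊔ Ideal.span {f}) c := by
  obtain ⟨ℓ, hℓ⟩ := h
  refine ⟨ℓ + 1, (isGradedShortExact_colon hI hf).hasBoundedRes_right ?_ hℓ.succ⟩
  rw [hcolon]
  exact hℓ.shift

protected theorem bot : HasRegularityLE (⊥ : Ideal (MvPolynomial σ K)) 0 := by
  refine ⟨1, .of_cover (ι := Unit) (s := 0)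
    (ε := Submodule.mkQ _ ∘ₗ LinearMap.proj ()) (fun _ => le_rfl) ⟨fun j => ?_, fun a => ?_, ?_⟩ ?_⟩
  · exact ⟨1, mem_twistedPiece_zero.2 (isHomogeneous_one _ _), by simp⟩
  · obtain ⟨p, rfl⟩ := Ideal.Quotient.mk_surjective a
    exact ⟨fun _ => p, rfl⟩
  · rintro d _ ⟨p, hp, rfl⟩
    exact ⟨fun _ => p, mem_freePiece.2 fun _ => hp, rfl⟩
  · refine Submodule.subsingleton_iff_eq_bot.2 ((Submodule.eq_bot_iff _).2 fun x hx => ?_)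
    funext j
    exact (Submodule.Quotient.mk_eq_zero ⊥).1 hx

end HasRegularityLE

end Colon

section Monomial

variable {σ K : Type} [CommRing K] {s : Set (σ →₀ ℕ)} {hs : IsUpperSet s}

theorem mem_restrictSupportIdeal {p : MvPolynomial σ K} :
    p ∈ restrictSupportIdeal K s hs ↔ ∀ m, coeff m p ≠ 0 → m ∈ s := by
  simp only [← mem_support_iff]
  rfl

theorem homogeneousComponent_mem_restrictSupportIdeal (p : MvPolynomial σ K)
    (hp : p ∈ restrictSupportIdeal K s hs) (d : ℕ) :
    homogeneousComponent d p ∈ restrictSupportIdeal K s hs := by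
  rw [mem_restrictSupportIdeal] at hp ⊢
  intro m hm
  rw [coeff_homogeneousComponent, ite_ne_right_iff] at hm
  exact hp m hm.2

theorem mem_restrictSupportIdeal_colon_X {y : σ} {p : MvPolynomial σ K} :
    p ∈ (restrictSupportIdeal K s hs).colon {X y} ↔
      ∀ m, coeff m p ≠ 0 → m + Finsupp.single y 1 ∈ s := by
  classical
  rw [Submodule.mem_colon_singleton, smul_eq_mul, mem_restrictSupportIdeal]
  refine ⟨fun h m hm => h _ (by rwa [coeff_mul_X]), fun h m hm => ?_⟩
  rw [coeff_mul_X', ite_ne_right_iff, Finsupp.mem_support_iff, ← Nat.one_le_iff_ne_zero,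
    ← Finsupp.single_le_iff] at hm
  simpa [tsub_add_cancel_of_le hm.1] using h _ hm.2

theorem mem_restrictSupportIdeal_sup_span_X {y : σ} {p : MvPolynomial σ K} :
    p ∈ restrictSupportIdeal K s hs ⊔ Ideal.span {X y} ↔
      ∀ m, coeff m p ≠ 0 → m ∈ s ∨ m y ≠ 0 := by
  classical
  have isUpperSet_sup : IsUpperSet {m : σ →₀ ℕ | m ∈ s ∨ m y ≠ 0} := fun a b hab ha =>
    ha.imp (hs hab ·) fun h => (Nat.pos_of_ne_zero h |>.trans_le (hab y)).ne'
  constructor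
  · suffices restrictSupportIdeal K s hs ⊔ Ideal.span {X y} ≤
        restrictSupportIdeal K _ isUpperSet_sup from fun hp => mem_restrictSupportIdeal.1 (this hp)
    refine sup_le (fun q hq => mem_restrictSupportIdeal.2 fun m hm =>
      Or.inl (mem_restrictSupportIdeal.1 hq m hm)) ?_
    rw [Ideal.span_singleton_le_iff_mem, mem_restrictSupportIdeal]
    intro m hm
    rw [coeff_X, ite_ne_right_iff] at hm
    exact Or.inr (by simp [← hm.1])
  · intro h
    rw [← modMonomial_add_divMonomial_single p y]
    refine add_mem (Ideal.mem_sup_left (mem_restrictSupportIdeal.2 fun m hm => ?_))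
      (Ideal.mem_sup_right (Ideal.mul_mem_right _ _ (Ideal.mem_span_singleton_self _)))
    have not_le : ¬ Finsupp.single y 1 ≤ m := fun hle => hm (coeff_modMonomial_of_le _ hle)
    rw [coeff_modMonomial_of_not_le _ not_le] at hm
    rw [Finsupp.single_le_iff, Nat.one_le_iff_ne_zero] at not_le
    exact (h m hm).resolve_right not_le

theorem hasRegularityLE_span_X_image (W : Finset σ) :
    HasRegularityLE (Ideal.span (X '' (W : Set σ)) : Ideal (MvPolynomial σ K)) 0 := by
  classical
  induction W using Finset.induction_on with
  | empty => simpa using HasRegularityLE.bot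
  | insert y W hy ih =>
    have isUpperSet_W : IsUpperSet {m : σ →₀ ℕ | ∃ w ∈ W, m w ≠ 0} := fun a b hab ⟨w, hw, ha⟩ =>
      ⟨w, hw, (Nat.pos_of_ne_zero ha |>.trans_le (hab w)).ne'⟩
    have span_eq : Ideal.span (X '' (W : Set σ)) = restrictSupportIdeal K _ isUpperSet_W := by
      ext p
      simp [mem_ideal_span_X_image, mem_restrictSupportIdeal]
    have colon_eq : (Ideal.span (X '' (W : Set σ)) : Ideal (MvPolynomial σ K)).colon {X y} =
        Ideal.span (X '' (W : Set σ)) := by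
      ext p
      rw [span_eq, mem_restrictSupportIdeal_colon_X, mem_restrictSupportIdeal]
      refine forall₂_congr fun m _ => exists_congr fun w => and_congr_right fun hw => ?_
      rw [Finsupp.add_apply, Finsupp.single_eq_of_ne (by rintro rfl; exact hy hw), add_zero]
    rw [Finset.coe_insert, Set.image_insert_eq, Ideal.span_insert, sup_comm]
    refine ih.sup_span_singleton ?_ (isHomogeneous_X _ _) colon_eq
    rw [span_eq]
    exact homogeneousComponent_mem_restrictSupportIdeal

end Monomial

/-! ### Upper bound for the regularity -/

section InducedMatching

variable {V : Type} [DecidableEq V] {G : SimpleGraph V} {r : ℕ} {f : Fin r → V × V}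

theorem isInducedMatching_iff : G.IsInducedMatching f ↔ (∀ i, G.Adj (f i).1 (f i).2) ∧
    ∀ i j, i ≠ j → ∀ u ∈ ({(f i).1, (f i).2} : Finset V),
      ∀ v ∈ ({(f j).1, (f j).2} : Finset V), u ≠ v ∧ ¬ G.Adj u v := by
  constructor
  · rintro ⟨adj, disjoint, edge⟩
    have eq_of_mem {i j : Fin r} {u : V} (hi : u ∈ ({(f i).1, (f i).2} : Finset V))
        (hj : u ∈ ({(f j).1, (f j).2} : Finset V)) : i = j := by
      by_contra hij
      exact Finset.disjoint_left.1 (disjoint i j hij) hi hj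
    refine ⟨adj, fun i j hij u hu v hv => ⟨?_, fun huv => hij ?_⟩⟩
    · rintro rfl
      exact hij (eq_of_mem hu hv)
    · obtain ⟨k, hk⟩ := edge u v huv (Finset.mem_biUnion.2 ⟨i, Finset.mem_univ i, hu⟩)
        (Finset.mem_biUnion.2 ⟨j, Finset.mem_univ j, hv⟩)
      rw [eq_of_mem hu (hk ▸ Finset.mem_insert_self u {v}),
        eq_of_mem hv (hk ▸ Finset.mem_insert_of_mem (Finset.mem_singleton_self v))]
  · rintro ⟨adj, separated⟩
    refine ⟨adj, fun i j hij => Finset.disjoint_left.2 fun u hu hu' =>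
      (separated i j hij u hu u hu').1 rfl, fun u v huv hu hv => ?_⟩
    obtain ⟨i, -, hi⟩ := Finset.mem_biUnion.1 hu
    obtain ⟨j, -, hj⟩ := Finset.mem_biUnion.1 hv
    obtain rfl : i = j := by
      by_contra hij
      exact (separated i j hij u hi v hj).2 huv
    refine ⟨i, Finset.eq_of_subset_of_card_le (Finset.insert_subset_iff.2
      ⟨hi, Finset.singleton_subset_iff.2 hj⟩) ?_⟩
    rw [Finset.card_pair huv.ne]
    exact Finset.card_le_two

theorem isInducedMatching_cons (hf : G.IsInducedMatching f) {x y : V} (hxy : G.Adj x y)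
    (h : ∀ u ∈ ({x, y} : Finset V), ∀ i, ∀ v ∈ ({(f i).1, (f i).2} : Finset V),
      u ≠ v ∧ ¬ G.Adj u v) :
    G.IsInducedMatching (Fin.cons (x, y) f : Fin (r + 1) → V × V) := by
  rw [isInducedMatching_iff] at hf ⊢
  refine ⟨Fin.cases hxy hf.1, Fin.cases (Fin.cases (absurd rfl) fun j _ u hu => h u hu j)
    fun i => Fin.cases (fun _ u hu v hv => ?_) fun j hij => hf.2 i j (mt (congrArg _) hij)⟩
  exact (h v hv i u hu).imp Ne.symm (mt G.adj_symm)

/-- `x` is a leaf, with neighbour `y`, of the subgraph of `G` induced on `U`. -/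
structure IsLeafIn (G : SimpleGraph V) (U : Finset V) (x y : V) : Prop where
  mem_left : x ∈ U
  mem_right : y ∈ U
  adj : G.Adj x y
  eq_of_adj : ∀ z ∈ U, G.Adj x z → z = y

open Classical in
/-- The vertices of `U` outside the closed neighbourhood of `y`. -/
noncomputable def deleteClosedNbhd (G : SimpleGraph V) (U : Finset V) (y : V) : Finset V :=
  {z ∈ U | z ≠ y ∧ ¬ G.Adj y z}

theorem mem_deleteClosedNbhd {U : Finset V} {y z : V} :
    z ∈ deleteClosedNbhd G U y ↔ z ∈ U ∧ z ≠ y ∧ ¬ G.Adj y z := by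
  simp [deleteClosedNbhd]

theorem deleteClosedNbhd_subset {U : Finset V} {y : V} : deleteClosedNbhd G U y ⊆ U :=
  fun _ hz => (mem_deleteClosedNbhd.1 hz).1

theorem deleteClosedNbhd_ssubset {U : Finset V} {y : V} (hy : y ∈ U) :
    deleteClosedNbhd G U y ⊂ U :=
  deleteClosedNbhd_subset.ssubset_of_mem_notMem hy fun h => (mem_deleteClosedNbhd.1 h).2.1 rfl

/-- Every induced matching of `G` inside `U` has at most `c` edges. -/
def InducedMatchingLE (G : SimpleGraph V) (U : Finset V) (c : ℕ) : Prop :=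
  ∀ (r : ℕ) (f : Fin r → V × V), G.IsInducedMatching f →
    (∀ i, ({(f i).1, (f i).2} : Finset V) ⊆ U) → r ≤ c

namespace InducedMatchingLE

variable {U U' : Finset V} {c : ℕ}

theorem mono (h : InducedMatchingLE G U c) (hU : U' ⊆ U) : InducedMatchingLE G U' c :=
  fun r f hf hfU => h r f hf fun i => (hfU i).trans hU

theorem succ_le (h : InducedMatchingLE G U c) {x y : V} (hl : IsLeafIn G U x y)
    (hf : G.IsInducedMatching f)
    (hfU : ∀ i, ({(f i).1, (f i).2} : Finset V) ⊆ deleteClosedNbhd G U y) : r + 1 ≤ c := by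
  refine h _ _ (isInducedMatching_cons hf hl.adj fun u hu i v hv => ?_)
    (Fin.cases (Finset.insert_subset_iff.2 ⟨hl.mem_left, Finset.singleton_subset_iff.2
      hl.mem_right⟩) fun i => (hfU i).trans deleteClosedNbhd_subset)
  obtain ⟨hvU, hvy, hyv⟩ := mem_deleteClosedNbhd.1 (hfU i hv)
  rcases Finset.mem_insert.1 hu with rfl | hu
  · refine ⟨?_, fun huv => hvy (hl.eq_of_adj v hvU huv)⟩
    rintro rfl
    exact hyv hl.adj.symm
  · rw [Finset.mem_singleton.1 hu]
    exact ⟨hvy.symm, hyv⟩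

theorem exists_eq_succ (h : InducedMatchingLE G U c) {x y : V} (hl : IsLeafIn G U x y) :
    ∃ c', c = c' + 1 ∧ InducedMatchingLE G (deleteClosedNbhd G U y) c' := by
  have pos : 0 + 1 ≤ c := h.succ_le (f := Fin.elim0) hl
    (isInducedMatching_iff.2 ⟨fun i => i.elim0, fun i => i.elim0⟩) fun i => i.elim0
  exact ⟨c - 1, by omega, fun r f hf hfU => Nat.le_sub_of_add_le (h.succ_le hl hf hfU)⟩

end InducedMatchingLE

end InducedMatching

section EdgeVarIdeal

variable {V : Type} {G : SimpleGraph V} {U W : Finset V}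

theorem isUpperSet_edgeVar (G : SimpleGraph V) (U W : Finset V) :
    IsUpperSet {m : V →₀ ℕ | (∃ w ∈ W, m w ≠ 0) ∨
      ∃ u ∈ U, ∃ v ∈ U, G.Adj u v ∧ m u ≠ 0 ∧ m v ≠ 0} := by
  have ne_zero {a b : V →₀ ℕ} (hab : a ≤ b) {v : V} (ha : a v ≠ 0) : b v ≠ 0 :=
    (Nat.pos_of_ne_zero ha |>.trans_le (hab v)).ne'
  rintro a b hab (⟨w, hw, ha⟩ | ⟨u, hu, v, hv, huv, hau, hav⟩)
  · exact Or.inl ⟨w, hw, ne_zero hab ha⟩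
  · exact Or.inr ⟨u, hu, v, hv, huv, ne_zero hab hau, ne_zero hab hav⟩

/-- The ideal generated by the variables in `W` and the edges of `G` inside `U`, as a monomial
ideal. -/
noncomputable def edgeVarIdeal (K : Type) [CommRing K] (G : SimpleGraph V) (U W : Finset V) :
    Ideal (MvPolynomial V K) :=
  restrictSupportIdeal K _ (isUpperSet_edgeVar G U W)

variable {K : Type} [CommRing K]

theorem mem_edgeVarIdeal {p : MvPolynomial V K} : p ∈ edgeVarIdeal K G U W ↔
    ∀ m, coeff m p ≠ 0 → (∃ w ∈ W, m w ≠ 0) ∨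
      ∃ u ∈ U, ∃ v ∈ U, G.Adj u v ∧ m u ≠ 0 ∧ m v ≠ 0 :=
  mem_restrictSupportIdeal

open Classical in
theorem edgeVarIdeal_colon_X [DecidableEq V] {y : V} (hy : y ∈ U) (hyW : y ∉ W) :
    (edgeVarIdeal K G U W).colon {X y} =
      edgeVarIdeal K G (deleteClosedNbhd G U y) (W ∪ {z ∈ U | G.Adj y z}) := by
  ext p
  rw [edgeVarIdeal, mem_restrictSupportIdeal_colon_X, mem_edgeVarIdeal]
  refine forall₂_congr fun m _ => ?_
  have add_single_ne_zero {z : V} :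
      (m + Finsupp.single y 1 : V →₀ ℕ) z ≠ 0 ↔ z = y ∨ m z ≠ 0 := by
    obtain rfl | hz := eq_or_ne z y <;> simp [*]
  simp only [Set.mem_ofPred_eq, add_single_ne_zero, Finset.mem_union, Finset.mem_filter,
    mem_deleteClosedNbhd]
  constructor
  · rintro (⟨w, hw, rfl | hmw⟩ | ⟨u, hu, v, hv, huv, hmu, hmv⟩)
    · exact absurd hw hyW
    · exact Or.inl ⟨w, Or.inl hw, hmw⟩
    · by_cases hyu : G.Adj y u
      · exact Or.inl ⟨u, Or.inr ⟨hu, hyu⟩, hmu.resolve_left hyu.ne'⟩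
      by_cases hyv : G.Adj y v
      · exact Or.inl ⟨v, Or.inr ⟨hv, hyv⟩, hmv.resolve_left hyv.ne'⟩
      have u_ne : u ≠ y := by
        rintro rfl
        exact hyv huv
      have v_ne : v ≠ y := by
        rintro rfl
        exact hyu huv.symm
      exact Or.inr ⟨u, ⟨hu, u_ne, hyu⟩, v, ⟨hv, v_ne, hyv⟩, huv, hmu.resolve_left u_ne,
        hmv.resolve_left v_ne⟩
  · rintro (⟨w, hw | ⟨hw, hyw⟩, hmw⟩ | ⟨u, ⟨hu, -⟩, v, ⟨hv, -⟩, huv, hmu, hmv⟩)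
    · exact Or.inl ⟨w, hw, Or.inr hmw⟩
    · exact Or.inr ⟨y, hy, w, hw, hyw, Or.inl rfl, Or.inr hmw⟩
    · exact Or.inr ⟨u, hu, v, hv, huv, Or.inr hmu, Or.inr hmv⟩

theorem edgeVarIdeal_sup_span_X [DecidableEq V] {x y : V} (hl : IsLeafIn G U x y) :
    edgeVarIdeal K G U W ⊔ Ideal.span {X y} =
      edgeVarIdeal K G (deleteClosedNbhd G U x) (insert y W) := by
  ext p
  rw [edgeVarIdeal, mem_restrictSupportIdeal_sup_span_X, mem_edgeVarIdeal]
  refine forall₂_congr fun m _ => ?_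
  simp only [Set.mem_ofPred_eq, Finset.exists_mem_insert, mem_deleteClosedNbhd]
  constructor
  · rintro ((hmW | ⟨u, hu, v, hv, huv, hmu, hmv⟩) | hmy)
    · exact Or.inl (Or.inr hmW)
    · by_cases hmy : m y = 0
      · have not_adj {z : V} (hz : z ∈ U) (hmz : m z ≠ 0) : ¬ G.Adj x z := fun hxz =>
          hmz (hl.eq_of_adj z hz hxz ▸ hmy)
        have u_ne : u ≠ x := by
          rintro rfl
          exact not_adj hv hmv huv
        have v_ne : v ≠ x := by
          rintro rfl
          exact not_adj hu hmu huv.symm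
        exact Or.inr ⟨u, ⟨hu, u_ne, not_adj hu hmu⟩, v, ⟨hv, v_ne, not_adj hv hmv⟩, huv, hmu, hmv⟩
      · exact Or.inl (Or.inl hmy)
    · exact Or.inl (Or.inl hmy)
  · rintro ((hmy | hmW) | ⟨u, ⟨hu, -⟩, v, ⟨hv, -⟩, h⟩)
    · exact Or.inr hmy
    · exact Or.inl (Or.inl hmW)
    · exact Or.inl (Or.inr ⟨u, hu, v, hv, h⟩)

theorem edgeVarIdeal_eq_span_X_image (h : ∀ u ∈ U, ∀ v ∈ U, ¬ G.Adj u v) :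
    edgeVarIdeal K G U W = Ideal.span (X '' (W : Set V)) := by
  ext p
  rw [mem_edgeVarIdeal, mem_ideal_span_X_image]
  simp only [← mem_support_iff]
  exact forall₂_congr fun m _ =>
    or_iff_left fun ⟨u, hu, v, hv, huv, _⟩ => h u hu v hv huv

theorem graphIdeal_eq_edgeVarIdeal [Fintype V] {K : Type} [Field K] (G : SimpleGraph V) :
    graphIdeal K G = edgeVarIdeal K G Finset.univ ∅ := by
  classical
  have generators_eq : {p : MvPolynomial V K | ∃ u v, G.Adj u v ∧ p = X u * X v} =
      (monomial · (1 : K)) '' {m | ∃ u v, G.Adj u v ∧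
        Finsupp.single u 1 + Finsupp.single v 1 = m} := by
    ext p
    simp only [Set.mem_ofPred_eq, Set.mem_image, X, monomial_mul, mul_one]
    aesop
  have single_add_single_le {u v : V} (huv : u ≠ v) (m : V →₀ ℕ) :
      Finsupp.single u 1 + Finsupp.single v 1 ≤ m ↔ m u ≠ 0 ∧ m v ≠ 0 := by
    refine ⟨fun h => ⟨?_, ?_⟩, fun ⟨hu, hv⟩ z => ?_⟩
    · exact Nat.one_le_iff_ne_zero.1 (by simpa [huv] using h u)
    · exact Nat.one_le_iff_ne_zero.1 (by simpa [huv.symm] using h v)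
    · simp only [Finsupp.add_apply, Finsupp.single_apply]
      split_ifs <;> subst_vars <;> grind
  ext p
  rw [graphIdeal, generators_eq, mem_ideal_span_monomial_image, mem_edgeVarIdeal]
  simp only [mem_support_iff]
  refine forall₂_congr fun m _ => ?_
  simp only [Set.mem_ofPred_eq, Finset.notMem_empty, false_and, exists_false, false_or,
    Finset.mem_univ, true_and]
  constructor
  · rintro ⟨_, ⟨u, v, huv, rfl⟩, hm⟩
    exact ⟨u, v, huv, (single_add_single_le huv.ne m).1 hm⟩
  · rintro ⟨u, v, huv, hm⟩
    exact ⟨_, ⟨u, v, huv, rfl⟩, (single_add_single_le huv.ne m).2 hm⟩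

end EdgeVarIdeal

section Link

variable {V : Type} [Fintype V] [DecidableEq V] {G : SimpleGraph V} {σ : Finset V}

open Classical in
/-- The vertices of the link of `σ` in the independence complex of `G`: those outside the closed
neighbourhood of `σ`. -/
noncomputable def linkVertices (G : SimpleGraph V) (σ : Finset V) : Finset V :=
  {x | x ∉ σ ∧ ∀ w ∈ σ, ¬ G.Adj w x}

theorem mem_linkVertices {x : V} : x ∈ linkVertices G σ ↔ x ∉ σ ∧ ∀ w ∈ σ, ¬ G.Adj w x := by
  simp [linkVertices]

theorem linkVertices_insert (y : V) :
    linkVertices G (insert y σ) = deleteClosedNbhd G (linkVertices G σ) y := by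
  ext z
  simp only [mem_linkVertices, mem_deleteClosedNbhd, Finset.mem_insert, forall_eq_or_imp]
  tauto

theorem isIndepSet_insert_of_mem_linkVertices (hσ : G.IsIndepSet σ) {y : V}
    (hy : y ∈ linkVertices G σ) : G.IsIndepSet (insert y σ : Finset V) := by
  rw [mem_linkVertices] at hy
  rw [SimpleGraph.isIndepSet_iff, Finset.coe_insert]
  exact Set.pairwise_insert.2
    ⟨hσ, fun w hw _ => ⟨mt G.adj_symm (hy.2 w hw), hy.2 w hw⟩⟩

/-- The subgraph induced on every link of the independence complex of `G` is edgeless or has a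
leaf. -/
def HasLeafProperty (G : SimpleGraph V) : Prop :=
  ∀ σ : Finset V, G.IsIndepSet σ →
    (∃ u ∈ linkVertices G σ, ∃ v ∈ linkVertices G σ, G.Adj u v) →
      ∃ x y, IsLeafIn G (linkVertices G σ) x y

variable {K : Type} [CommRing K]

theorem hasRegularityLE_edgeVarIdeal (hG : HasLeafProperty G) (hσ : G.IsIndepSet σ) {W : Finset V}
    (hW : Disjoint (linkVertices G σ) W) {c : ℕ} (hc : InducedMatchingLE G (linkVertices G σ) c) :
    HasRegularityLE (edgeVarIdeal K G (linkVertices G σ) W) c := by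
  induction hk : (linkVertices G σ).card using Nat.strong_induction_on generalizing σ W c with
  | _ k ih =>
  subst hk
  by_cases hE : ∃ u ∈ linkVertices G σ, ∃ v ∈ linkVertices G σ, G.Adj u v
  · obtain ⟨x, y, hl⟩ := hG σ hσ hE
    have card_lt {z : V} (hz : z ∈ linkVertices G σ) :
        (linkVertices G (insert z σ)).card < (linkVertices G σ).card := by
      rw [linkVertices_insert]
      exact Finset.card_lt_card (deleteClosedNbhd_ssubset hz)
    obtain ⟨c, rfl, hc'⟩ := hc.exists_eq_succ hl
    have hy := Finset.disjoint_left.1 hW hl.mem_right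
    refine HasRegularityLE.of_colon_of_sup homogeneousComponent_mem_restrictSupportIdeal
      (isHomogeneous_X _ y) ?_ ?_
    · rw [edgeVarIdeal_colon_X hl.mem_right hy, ← linkVertices_insert]
      refine ih _ (card_lt hl.mem_right) (isIndepSet_insert_of_mem_linkVertices hσ hl.mem_right)
        ?_ (by rwa [linkVertices_insert]) rfl
      rw [linkVertices_insert, Finset.disjoint_left]
      intro z hz
      rw [mem_deleteClosedNbhd] at hz
      simp [Finset.disjoint_left.1 hW hz.1, hz.2.2]
    · rw [edgeVarIdeal_sup_span_X hl, ← linkVertices_insert]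
      refine ih _ (card_lt hl.mem_left) (isIndepSet_insert_of_mem_linkVertices hσ hl.mem_left)
        ?_ (linkVertices_insert (G := G) (σ := σ) x ▸ hc.mono deleteClosedNbhd_subset) rfl
      rw [linkVertices_insert, Finset.disjoint_left]
      intro z hz
      rw [mem_deleteClosedNbhd] at hz
      have z_ne : z ≠ y := by
        rintro rfl
        exact hz.2.2 hl.adj
      simp [Finset.disjoint_left.1 hW hz.1, z_ne]
  · rw [edgeVarIdeal_eq_span_X_image fun u hu v hv huv => hE ⟨u, hu, v, hv, huv⟩]
    exact (hasRegularityLE_span_X_image W).mono (Nat.zero_le c)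

theorem hasRegularityLE_graphIdeal {K : Type} [Field K] (hG : HasLeafProperty G) {c : ℕ}
    (hc : InducedMatchingLE G Finset.univ c) : HasRegularityLE (graphIdeal K G) c := by
  have linkVertices_empty : linkVertices G ∅ = Finset.univ := by
    ext
    simp [mem_linkVertices]
  rw [graphIdeal_eq_edgeVarIdeal, ← linkVertices_empty]
  exact hasRegularityLE_edgeVarIdeal hG (by simp) (Finset.disjoint_empty_right _)
    (by rwa [linkVertices_empty])

end Link

/-! ### Koszul homology -/

section KoszulComplex

variable {σ α R : Type} [LinearOrder α] [CommRing R] {ρ : σ → α} {x : σ → R}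
  {M N : Type} [AddCommGroup M] [Module R M] [AddCommGroup N] [Module R N]

/-- The sign of `v` relative to `T` in the Koszul complex whose index set `σ` is ordered by `ρ`. -/
def koszulSign (ρ : σ → α) (T : Finset σ) (v : σ) : ℤ :=
  (-1) ^ (T.filter fun w => ρ w < ρ v).card

theorem koszulSign_insert [DecidableEq σ] {T : Finset σ} {u : σ} (hu : u ∉ T) (v : σ) :
    koszulSign ρ (insert u T) v = (if ρ u < ρ v then -1 else 1) * koszulSign ρ T v := by
  unfold koszulSign
  rw [Finset.filter_insert]
  split_ifs
  · rw [Finset.card_insert_of_notMem (by simp [hu]), pow_succ']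
  · rw [one_mul]

theorem koszulSign_eq_one {T : Finset σ} {v : σ} (h : ∀ u ∈ T, ρ v < ρ u) :
    koszulSign ρ T v = 1 := by
  rw [koszulSign, Finset.filter_false_of_mem fun u hu => (h u hu).not_gt, Finset.card_empty,
    pow_zero]

theorem koszulSign_mul_koszulSign_insert [DecidableEq σ] (hρ : Function.Injective ρ)
    {T : Finset σ} {u v : σ} (hu : u ∉ T) (hv : v ∉ T) (huv : u ≠ v) :
    koszulSign ρ T u * koszulSign ρ (insert u T) v =
      -(koszulSign ρ T v * koszulSign ρ (insert v T) u) := by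
  rw [koszulSign_insert hu, koszulSign_insert hv]
  rcases (hρ.ne huv).lt_or_gt with h | h
  · rw [if_pos h, if_neg h.not_gt]
    ring
  · rw [if_pos h, if_neg h.not_gt]
    ring

variable [Fintype σ] [DecidableEq σ]

/-- The Koszul differential of the sequence `x` with coefficients in `M`. A chain `z` is a family of
elements of `M` indexed by all finite subsets of `σ`; those of cardinality `i` are its part of
degree `i`. -/
def koszulDiff (ρ : σ → α) (x : σ → R) (z : Finset σ → M) (T : Finset σ) : M :=
  ∑ v ∈ Tᶜ, koszulSign ρ T v • x v • z (insert v T)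

theorem map_koszulDiff (f : M →ₗ[R] N) (z : Finset σ → M) (T : Finset σ) :
    f (koszulDiff ρ x z T) = koszulDiff ρ x (fun T => f (z T)) T := by
  simp only [koszulDiff, map_sum, map_zsmul, map_smul]

theorem koszulDiff_congr {z z' : Finset σ → M} {T : Finset σ}
    (h : ∀ T', T'.card = T.card + 1 → z T' = z' T') : koszulDiff ρ x z T = koszulDiff ρ x z' T :=
  Finset.sum_congr rfl fun v hv => by
    rw [h _ (Finset.card_insert_of_notMem (Finset.mem_compl.1 hv))]

theorem koszulDiff_sub (z z' : Finset σ → M) (T : Finset σ) :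
    koszulDiff ρ x (z - z') T = koszulDiff ρ x z T - koszulDiff ρ x z' T := by
  simp only [koszulDiff, Pi.sub_apply, smul_sub, Finset.sum_sub_distrib]

theorem koszulDiff_koszulDiff (hρ : Function.Injective ρ) (z : Finset σ → M) (T : Finset σ) :
    koszulDiff ρ x (koszulDiff ρ x z) T = 0 := by
  simp only [koszulDiff, Finset.smul_sum]
  rw [Finset.sum_sigma']
  refine Finset.sum_involution (fun p _ => ⟨p.2, p.1⟩) ?_ ?_ ?_ fun _ _ => rfl
  · rintro ⟨v, u⟩ h
    simp only [Finset.mem_sigma, Finset.mem_compl, Finset.mem_insert, not_or] at h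
    have swap (u v : σ) (w : M) : koszulSign ρ T v • x v • koszulSign ρ (insert v T) u • x u • w =
        (koszulSign ρ T v * koszulSign ρ (insert v T) u) • (x v * x u) • w := by
      rw [mul_smul, mul_smul, smul_comm (x v) (koszulSign ρ (insert v T) u)]
    rw [swap, swap, koszulSign_mul_koszulSign_insert hρ h.1 h.2.2 (Ne.symm h.2.1), mul_comm (x u),
      Finset.insert_comm, neg_smul, neg_add_cancel]
  · rintro ⟨v, u⟩ h - heq
    simp only [Finset.mem_sigma, Finset.mem_compl, Finset.mem_insert, not_or] at h
    exact h.2.1 (congrArg Sigma.fst heq)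
  · rintro ⟨v, u⟩ h
    simp only [Finset.mem_sigma, Finset.mem_compl, Finset.mem_insert, not_or] at h ⊢
    exact ⟨h.2.2, Ne.symm h.2.1, h.1⟩

end KoszulComplex

section RestrictVars

variable {σ K : Type} [CommRing K] {F : Set σ}

/-- The endomorphism of `K[σ]` that sends the variables outside `F` to zero. -/
noncomputable def restrictVars (F : Set σ) : MvPolynomial σ K →ₐ[K] MvPolynomial σ K :=
  aeval (F.indicator X)

theorem restrictVars_X_of_mem {v : σ} (hv : v ∈ F) :
    restrictVars F (X v : MvPolynomial σ K) = X v := by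
  rw [restrictVars, aeval_X, Set.indicator_of_mem hv]

theorem restrictVars_X_of_notMem {v : σ} (hv : v ∉ F) :
    restrictVars F (X v : MvPolynomial σ K) = 0 := by
  rw [restrictVars, aeval_X, Set.indicator_of_notMem hv]

open Classical in
theorem coeff_restrictVars (p : MvPolynomial σ K) (m : σ →₀ ℕ) :
    coeff m (restrictVars F p) = if ↑m.support ⊆ F then coeff m p else 0 := by
  have restrictVars_monomial (m : σ →₀ ℕ) (a : K) : restrictVars F (monomial m a) =
      if ↑m.support ⊆ F then monomial m a else 0 := by
    rw [restrictVars, aeval_monomial, monomial_eq]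
    split_ifs with h
    · refine congrArg _ (Finset.prod_congr rfl fun v hv => ?_)
      exact congrArg (· ^ m v) (Set.indicator_of_mem (h hv) X)
    · obtain ⟨v, hv, hvF⟩ := Set.not_subset.1 h
      rw [Finsupp.prod, Finset.prod_eq_zero hv, mul_zero]
      rw [Set.indicator_of_notMem hvF, zero_pow (Finsupp.mem_support_iff.1 hv)]
  induction p using MvPolynomial.induction_on' with
  | monomial u a =>
    rw [restrictVars_monomial, coeff_monomial]
    aesop
  | add p q hp hq =>
    rw [map_add, coeff_add, coeff_add, hp, hq]
    split_ifs <;> simp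

end RestrictVars

section Contraction

variable {σ α K : Type} [CommRing K] [LinearOrder α] {ρ : σ → α}

theorem X_mul_divMonomial_of_ne {t v : σ} (h : v ≠ t) (p : MvPolynomial σ K) :
    (X v * p).divMonomial (Finsupp.single t 1) = X v * p.divMonomial (Finsupp.single t 1) := by
  classical
  ext m
  have mem_support : v ∈ (Finsupp.single t 1 + m).support ↔ v ∈ m.support := by
    simp [h.symm]
  have sub_single : Finsupp.single t 1 + m - Finsupp.single v 1 =
      Finsupp.single t 1 + (m - Finsupp.single v 1) := by
    ext u
    simp only [Finsupp.tsub_apply, Finsupp.add_apply, Finsupp.single_apply]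
    grind
  rw [coeff_divMonomial, coeff_X_mul', coeff_X_mul', coeff_divMonomial, sub_single,
    if_congr mem_support rfl rfl]

/-- Divides by `t` the monomials whose smallest variable, in the order given by `ρ`, is `t`, and
kills all others. -/
noncomputable def contraction (ρ : σ → α) (t : σ) : MvPolynomial σ K →+ MvPolynomial σ K where
  toFun p := restrictVars {u | ρ t ≤ ρ u} (p.divMonomial (Finsupp.single t 1))
  map_zero' := by simp
  map_add' p q := by rw [add_divMonomial, map_add]

theorem contraction_apply (t : σ) (p : MvPolynomial σ K) :
    contraction ρ t p = restrictVars {u | ρ t ≤ ρ u} (p.divMonomial (Finsupp.single t 1)) :=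
  rfl

theorem contraction_X_mul_self (t : σ) (p : MvPolynomial σ K) :
    contraction ρ t (X t * p) = restrictVars {u | ρ t ≤ ρ u} p := by
  rw [contraction_apply, X_mul_divMonomial]

theorem contraction_X_mul_of_lt {t v : σ} (h : ρ v < ρ t) (p : MvPolynomial σ K) :
    contraction ρ t (X v * p) = 0 := by
  rw [contraction_apply, X_mul_divMonomial_of_ne (ne_of_apply_ne ρ h.ne), map_mul,
    restrictVars_X_of_notMem (by simpa using h), zero_mul]

theorem contraction_X_mul_of_gt {t v : σ} (h : ρ t < ρ v) (p : MvPolynomial σ K) :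
    contraction ρ t (X v * p) = X v * contraction ρ t p := by
  rw [contraction_apply, X_mul_divMonomial_of_ne (ne_of_apply_ne ρ h.ne'), map_mul,
    restrictVars_X_of_mem (F := {u | ρ t ≤ ρ u}) h.le, contraction_apply]

open Classical in
theorem coeff_X_mul_contraction (t : σ) (p : MvPolynomial σ K) (m : σ →₀ ℕ) :
    coeff m (X t * contraction ρ t p) =
      if t ∈ m.support ∧ ∀ u ∈ m.support, ρ t ≤ ρ u then coeff m p else 0 := by
  rw [coeff_X_mul', ite_and]
  refine if_ctx_congr Iff.rfl (fun ht => ?_) fun _ => rfl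
  obtain ⟨m, rfl⟩ : ∃ m', m = Finsupp.single t 1 + m' :=
    exists_add_of_le (by simpa [Finsupp.single_le_iff, Nat.one_le_iff_ne_zero] using ht)
  rw [add_tsub_cancel_left, contraction_apply, coeff_restrictVars, coeff_divMonomial]
  refine if_congr ⟨fun h u hu => ?_, fun h u hu => h u ?_⟩ rfl rfl
  · obtain rfl | hut := eq_or_ne u t
    · exact le_rfl
    · exact h (by simpa [hut.symm] using hu)
  · simp only [Finset.mem_coe, Finsupp.mem_support_iff, Finsupp.add_apply] at hu ⊢
    omega

theorem coeff_sum_X_mul_contraction (hρ : Function.Injective ρ) (s : Finset σ)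
    (p : MvPolynomial σ K) {m : σ →₀ ℕ} {t : σ} (ht : t ∈ m.support)
    (ht_min : ∀ u ∈ m.support, ρ t ≤ ρ u) [Decidable (t ∈ s)] :
    coeff m (∑ v ∈ s, X v * contraction ρ v p) = if t ∈ s then coeff m p else 0 := by
  classical
  have min_iff (v : σ) : (v ∈ m.support ∧ ∀ u ∈ m.support, ρ v ≤ ρ u) ↔ t = v :=
    ⟨fun h => hρ (le_antisymm (ht_min v h.1) (h.2 t ht)), fun h => h ▸ ⟨ht, ht_min⟩⟩
  simp only [coeff_sum, coeff_X_mul_contraction, min_iff, Finset.sum_ite_eq]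
  congr

theorem sum_X_mul_contraction [Fintype σ] (hρ : Function.Injective ρ) {p : MvPolynomial σ K}
    (hp : coeff 0 p = 0) : ∑ v, X v * contraction ρ v p = p := by
  classical
  ext m
  obtain rfl | hm := eq_or_ne m 0
  · simp [coeff_sum, coeff_X_mul', hp]
  · obtain ⟨t, ht, ht_min⟩ :=
      Finset.exists_min_image m.support ρ (Finsupp.support_nonempty_iff.2 hm)
    simp [coeff_sum_X_mul_contraction hρ _ _ ht ht_min]

theorem restrictVars_add_sum_X_mul_contraction [Fintype σ] (hρ : Function.Injective ρ) (t : σ)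
    (p : MvPolynomial σ K) :
    restrictVars {u | ρ t ≤ ρ u} p + ∑ v with ρ v < ρ t, X v * contraction ρ v p = p := by
  classical
  ext m
  rw [coeff_add, coeff_restrictVars]
  split_ifs with h
  · rw [coeff_sum, Finset.sum_eq_zero fun v hv => ?_, add_zero]
    rw [coeff_X_mul_contraction, if_neg fun hvm => ?_]
    exact (Finset.mem_filter.1 hv).2.not_ge (h hvm.1)
  · obtain ⟨u, hu, hut⟩ := Set.not_subset.1 h
    obtain ⟨w, hw, hw_min⟩ := Finset.exists_min_image m.support ρ ⟨u, hu⟩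
    have hwt : ρ w < ρ t := (hw_min u hu).trans_lt (not_le.1 hut)
    rw [coeff_sum_X_mul_contraction hρ _ _ hw hw_min, if_pos (by simpa using hwt), zero_add]

end Contraction

section KoszulExact

variable {σ α K : Type} [CommRing K] [LinearOrder α] [DecidableEq σ] {ρ : σ → α}

open Classical in
/-- The contracting homotopy of the Koszul complex of the variables of `K[σ]`. -/
noncomputable def koszulHomotopy (ρ : σ → α) (z : Finset σ → MvPolynomial σ K) (T : Finset σ) :
    MvPolynomial σ K :=
  if h : ∃ t ∈ T, ∀ u ∈ T, ρ t ≤ ρ u then contraction ρ h.choose (z (T.erase h.choose)) else 0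

theorem koszulHomotopy_insert (z : Finset σ → MvPolynomial σ K) {T : Finset σ} {t : σ}
    (ht : ∀ u ∈ T, ρ t < ρ u) : koszulHomotopy ρ z (insert t T) = contraction ρ t (z T) := by
  have h : ∃ t' ∈ insert t T, ∀ u ∈ insert t T, ρ t' ≤ ρ u :=
    ⟨t, Finset.mem_insert_self t T, by simpa using fun u hu => (ht u hu).le⟩
  have choose_eq : h.choose = t := by
    obtain ⟨hmem, hmin⟩ := h.choose_spec
    exact (Finset.mem_insert.1 hmem).resolve_right fun hT =>
      (hmin t (Finset.mem_insert_self t T)).not_gt (ht _ hT)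
  rw [koszulHomotopy, dif_pos h, choose_eq, Finset.erase_insert fun hT => (ht t hT).false]

theorem koszulHomotopy_summand (hρ : Function.Injective ρ) (z : Finset σ → MvPolynomial σ K)
    {T : Finset σ} {t v : σ} (ht : ∀ u ∈ T, ρ t < ρ u) (hv : v ∉ insert t T) :
    koszulSign ρ (insert t T) v • (X v : MvPolynomial σ K) •
        koszulHomotopy ρ z (insert v (insert t T)) +
      contraction ρ t (koszulSign ρ T v • (X v : MvPolynomial σ K) • z (insert v T)) =
      if ρ v < ρ t then X v * contraction ρ v (z (insert t T)) else 0 := by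
  have hvt : v ≠ t := (not_or.1 (mt Finset.mem_insert.2 hv)).1
  rw [map_zsmul, smul_eq_mul, smul_eq_mul]
  rcases (hρ.ne hvt).lt_or_gt with h | h
  · have v_min : ∀ u ∈ insert t T, ρ v < ρ u :=
      Finset.forall_mem_insert _ _ _ |>.2 ⟨h, fun u hu => h.trans (ht u hu)⟩
    rw [koszulHomotopy_insert z v_min, koszulSign_eq_one v_min, contraction_X_mul_of_lt h,
      if_pos h, one_smul, smul_zero, add_zero]
  · have t_min : ∀ u ∈ insert v T, ρ t < ρ u := Finset.forall_mem_insert _ _ _ |>.2 ⟨h, ht⟩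
    rw [Finset.insert_comm, koszulHomotopy_insert z t_min, contraction_X_mul_of_gt h,
      koszulSign_insert fun hT => (ht t hT).false, if_pos h, if_neg h.not_gt, neg_one_mul,
      neg_smul, neg_add_cancel]

variable [Fintype σ]

theorem koszulDiff_koszulHomotopy_insert (hρ : Function.Injective ρ)
    (z : Finset σ → MvPolynomial σ K) {T : Finset σ} {t : σ} (ht : ∀ u ∈ T, ρ t < ρ u) :
    koszulDiff ρ (X (R := K)) (koszulHomotopy ρ z) (insert t T) +
      contraction ρ t (koszulDiff ρ (X (R := K)) z T) = z (insert t T) := by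
  have compl_eq : Tᶜ = insert t (insert t T)ᶜ := by
    ext u
    have : u = t → u ∉ T := by
      rintro rfl hu
      exact (ht u hu).false
    simp only [Finset.mem_compl, Finset.mem_insert]
    tauto
  have sum_lt : ∑ v ∈ (insert t T)ᶜ,
      (if ρ v < ρ t then X v * contraction ρ v (z (insert t T)) else 0) =
        ∑ v with ρ v < ρ t, X v * contraction ρ v (z (insert t T)) := by
    rw [← Finset.sum_filter]
    refine Finset.sum_congr (Finset.ext fun v => ?_) fun _ _ => rfl
    simp only [Finset.mem_filter, Finset.mem_compl, Finset.mem_univ, true_and,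
      and_iff_right_iff_imp, Finset.mem_insert, not_or]
    exact fun h => ⟨ne_of_apply_ne ρ h.ne, fun hv => (ht v hv).not_gt h⟩
  rw [koszulDiff, koszulDiff, compl_eq, Finset.sum_insert (by simp), koszulSign_eq_one ht, one_smul,
    map_add, smul_eq_mul, contraction_X_mul_self, map_sum, add_left_comm,
    ← Finset.sum_add_distrib, Finset.sum_congr rfl fun v hv =>
      koszulHomotopy_summand hρ z ht (Finset.mem_compl.1 hv), sum_lt,
    restrictVars_add_sum_X_mul_contraction hρ]

theorem koszulDiff_koszulHomotopy (hρ : Function.Injective ρ) {z : Finset σ → MvPolynomial σ K}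
    {i : ℕ} (hz : ∀ T, T.card + 1 = i → koszulDiff ρ (X (R := K)) z T = 0)
    (h0 : i = 0 → coeff 0 (z ∅) = 0) {T : Finset σ} (hT : T.card = i) :
    koszulDiff ρ (X (R := K)) (koszulHomotopy ρ z) T = z T := by
  obtain rfl | hne := T.eq_empty_or_nonempty
  · rw [koszulDiff, ← sum_X_mul_contraction hρ (h0 (hT.symm.trans Finset.card_empty)),
      Finset.compl_empty]
    refine Finset.sum_congr rfl fun v _ => ?_
    rw [koszulHomotopy_insert z (by simp), koszulSign_eq_one (by simp), one_smul, smul_eq_mul]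
  · obtain ⟨t, ht, ht_min⟩ := Finset.exists_min_image T ρ hne
    have lt_of_mem_erase : ∀ u ∈ T.erase t, ρ t < ρ u := fun u hu =>
      (ht_min u (Finset.mem_of_mem_erase hu)).lt_of_ne (hρ.ne (Finset.ne_of_mem_erase hu).symm)
    have homotopy := koszulDiff_koszulHomotopy_insert hρ z lt_of_mem_erase
    rwa [hz _ ((Finset.card_erase_add_one ht).trans hT), map_zero, add_zero,
      Finset.insert_erase ht] at homotopy

end KoszulExact

section KoszulVanishing

variable {σ α K : Type} [CommRing K] {m : ℕ} {s : Fin m → ℕ}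

theorem coeff_zero_of_mem_freePiece {c e : ℕ} (hs : ∀ j, s j ≤ c) (hce : c < e)
    {y : Fin m → MvPolynomial σ K} (hy : y ∈ freePiece s e) (j : Fin m) : coeff 0 (y j) = 0 := by
  rcases mem_twistedPiece.1 (mem_freePiece.1 hy j) with h | ⟨-, h⟩
  · rw [h, coeff_zero]
  · refine h.coeff_eq_zero ?_
    have := hs j
    rw [map_zero]
    omega

variable [LinearOrder α] [Fintype σ] [DecidableEq σ] {ρ : σ → α}

theorem koszulDiff_apply (y : Finset σ → Fin m → MvPolynomial σ K) (T : Finset σ) (j : Fin m) :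
    koszulDiff ρ (X (R := K)) y T j = koszulDiff ρ (X (R := K)) (fun T => y T j) T :=
  map_koszulDiff (LinearMap.proj j : (Fin m → MvPolynomial σ K) →ₗ[MvPolynomial σ K] _) y T

theorem koszulDiff_mem_freePiece {e i : ℕ} {y : Finset σ → Fin m → MvPolynomial σ K}
    (hy : ∀ T, T.card = i + 1 → y T ∈ freePiece s e) {T : Finset σ} (hT : T.card = i) :
    koszulDiff ρ (X (R := K)) y T ∈ freePiece s (e + 1) := by
  refine sum_mem fun v hv => zsmul_mem ?_ _
  refine isGradedFamily_freePiece s (t := e) (mem_twistedPiece.2 (Or.inr ⟨e.le_succ, ?_⟩)) (hy _ ?_)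
  · rw [Nat.add_sub_cancel_left]
    exact isHomogeneous_X _ _
  · rw [Finset.card_insert_of_notMem (Finset.mem_compl.1 hv), hT]

theorem exists_koszulDiff_eq_pi (hρ : Function.Injective ρ) {i : ℕ}
    {y : Finset σ → Fin m → MvPolynomial σ K}
    (hy : ∀ T, T.card + 1 = i → koszulDiff ρ (X (R := K)) y T = 0)
    (h0 : i = 0 → ∀ j, coeff 0 (y ∅ j) = 0) :
    ∃ w : Finset σ → Fin m → MvPolynomial σ K,
      ∀ T, T.card = i → koszulDiff ρ (X (R := K)) w T = y T := by
  refine ⟨fun T j => koszulHomotopy ρ (fun T => y T j) T, fun T hT => funext fun j => ?_⟩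
  rw [koszulDiff_apply]
  refine koszulDiff_koszulHomotopy hρ (fun T hT => ?_) (fun hi => h0 hi j) hT
  rw [← koszulDiff_apply, hy T hT, Pi.zero_apply]

theorem exists_koszulDiff_coe_eq (hρ : Function.Injective ρ) {e i : ℕ}
    {Z : Submodule (MvPolynomial σ K) (Fin m → MvPolynomial σ K)}
    {y : Finset σ → Fin m → MvPolynomial σ K} (hy : ∀ T, T.card = i + 1 → y T ∈ freePiece s e)
    (hyZ : ∀ T, T.card = i → koszulDiff ρ (X (R := K)) y T ∈ Z)
    (hZ : ∀ z : Finset σ → Z, (∀ T, T.card = i → z T ∈ inducedPiece (freePiece s) Z (e + 1)) →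
      (∀ T, T.card + 1 = i → koszulDiff ρ (X (R := K)) z T = 0) →
        ∃ w : Finset σ → Z, ∀ T, T.card = i → koszulDiff ρ (X (R := K)) w T = z T) :
    ∃ u : Finset σ → Z, ∀ T, T.card = i →
      koszulDiff ρ (X (R := K)) (fun T => (u T).1) T = koszulDiff ρ (X (R := K)) y T := by
  let dy (T : Finset σ) : Z :=
    if hT : T.card = i then ⟨koszulDiff ρ (X (R := K)) y T, hyZ T hT⟩ else 0
  have coe_dy {T : Finset σ} (hT : T.card = i) :
      (dy T).1 = koszulDiff ρ (X (R := K)) y T := by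
    simp [dy, hT]
  obtain ⟨u, hu⟩ := hZ dy
    (fun T hT => by
      rw [mem_inducedPiece, coe_dy hT]
      exact koszulDiff_mem_freePiece hy hT)
    (fun T hT => Subtype.ext <| by
      rw [← Z.subtype_apply, map_koszulDiff, ZeroMemClass.coe_zero,
        ← koszulDiff_koszulDiff (x := X (R := K)) hρ y T]
      exact koszulDiff_congr fun T' hT' => coe_dy (by omega))
  refine ⟨u, fun T hT => ?_⟩
  rw [← coe_dy hT, ← hu T hT]
  exact (map_koszulDiff Z.subtype u T).symm

theorem HasBoundedRes.exists_koszulDiff_eq (hρ : Function.Injective ρ) {ℓ c i e : ℕ} {M : Type}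
    [AddCommGroup M] [Module (MvPolynomial σ K) M] {gM : ℕ → AddSubgroup M}
    (hM : HasBoundedRes σ K ℓ c M gM) {z : Finset σ → M} (hz : ∀ T, T.card = i → z T ∈ gM e)
    (hdz : ∀ T, T.card + 1 = i → koszulDiff ρ (X (R := K)) z T = 0) (hce : c < e) :
    ∃ w : Finset σ → M, ∀ T, T.card = i → koszulDiff ρ (X (R := K)) w T = z T := by
  induction ℓ generalizing c i e M with
  | zero =>
    have : Subsingleton M := hM
    exact ⟨0, fun _ _ => Subsingleton.elim _ _⟩
  | succ ℓ ih =>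
    obtain ⟨m, s, ε, hs, hε, hker⟩ := hM
    have exists_lift (T : Finset σ) : ∃ y, T.card = i → y ∈ freePiece s e ∧ ε y = z T := by
      by_cases hT : T.card = i
      · exact (hε.exists_lift (hz T hT)).imp fun _ hy _ => hy
      · exact ⟨0, fun h => absurd h hT⟩
    choose y hy using exists_lift
    obtain ⟨u, hu, hdu⟩ : ∃ u : Finset σ → LinearMap.ker ε, (i = 0 → u = 0) ∧
        ∀ T, T.card + 1 = i →
          koszulDiff ρ (X (R := K)) (fun T => (u T).1) T = koszulDiff ρ (X (R := K)) y T := by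
      cases i with
      | zero => exact ⟨0, fun _ => rfl, fun T hT => by omega⟩
      | succ i =>
        refine (exists_koszulDiff_coe_eq hρ (fun T hT => (hy T hT).1) (fun T hT => ?_)
          fun z hz hdz => ih hker hz hdz (by omega)).imp fun u hu =>
            ⟨fun hi => absurd hi i.succ_ne_zero, fun T hT => hu T (by omega)⟩
        rw [LinearMap.mem_ker, map_koszulDiff, ← hdz T (by omega)]
        exact koszulDiff_congr fun T' hT' => (hy T' (by omega)).2
    obtain ⟨w, hw⟩ := exists_koszulDiff_eq_pi hρ (y := y - fun T => (u T).1)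
      (fun T hT => by rw [koszulDiff_sub, hdu T hT, sub_self])
      (fun hi j => by
        have := coeff_zero_of_mem_freePiece hs hce (hy ∅ (by simp [hi])).1 j
        simpa [hu hi] using this)
    refine ⟨fun T => ε (w T), fun T hT => ?_⟩
    rw [← map_koszulDiff, hw T hT, Pi.sub_apply, map_sub, (hy T hT).2, (u T).2, sub_zero]

end KoszulVanishing

/-! ### Lower bound for the regularity -/

theorem exists_injective_nat_comp_eq {β V : Type} [Finite β] [Finite V] {p : β → V} {g : β → ℕ}
    (hp : Function.Injective p) (hg : Function.Injective g) :
    ∃ ρ : V → ℕ, Function.Injective ρ ∧ ∀ b, ρ (p b) = g b := by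
  obtain ⟨N, hN⟩ := (Set.finite_range g).bddAbove
  have g_le (b : β) : g b ≤ N := hN (Set.mem_range_self b)
  obtain ⟨e, he⟩ := exists_injective_nat V
  let ρ := Function.extend p g fun v => N + 1 + e v
  have ρ_p (b : β) : ρ (p b) = g b := hp.extend_apply g _ b
  have ρ_of_notMem {v : V} (hv : ¬ ∃ b, p b = v) : ρ v = N + 1 + e v :=
    Function.extend_apply' g _ v hv
  refine ⟨ρ, fun u v huv => ?_, ρ_p⟩
  by_cases hu : ∃ b, p b = u <;> by_cases hv : ∃ b, p b = v
  · obtain ⟨b, rfl⟩ := hu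
    obtain ⟨b', rfl⟩ := hv
    rw [ρ_p, ρ_p] at huv
    rw [hg huv]
  · obtain ⟨b, rfl⟩ := hu
    rw [ρ_p, ρ_of_notMem hv] at huv
    have := g_le b
    omega
  · obtain ⟨b, rfl⟩ := hv
    rw [ρ_p, ρ_of_notMem hu] at huv
    have := g_le b
    omega
  · rw [ρ_of_notMem hu, ρ_of_notMem hv] at huv
    exact he (by omega)

section Transversal

variable {V : Type} {r : ℕ} {p : Fin r × Bool → V} {s : Finset (Fin r)} {τ τ' : Fin r → Bool}

/-- The vertices selected by `τ` from those of the pairs `p (i, true)`, `p (i, false)` for which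
`i ∈ s`. -/
def transversal [DecidableEq V] (p : Fin r × Bool → V) (s : Finset (Fin r)) (τ : Fin r → Bool) :
    Finset V :=
  s.image fun i => p (i, τ i)

/-- The exponent vector of the product of the vertices that `transversal p s τ` leaves out of the
pairs with index in `s`. -/
noncomputable def oppositeExponent (p : Fin r × Bool → V) (s : Finset (Fin r)) (τ : Fin r → Bool) :
    V →₀ ℕ :=
  ∑ i ∈ s, Finsupp.single (p (i, !τ i)) 1

theorem oppositeExponent_congr (h : ∀ i ∈ s, τ i = τ' i) :
    oppositeExponent p s τ = oppositeExponent p s τ' :=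
  Finset.sum_congr rfl fun i hi => by rw [h i hi]

theorem oppositeExponent_univ (i : Fin r) : oppositeExponent p Finset.univ τ =
    Finsupp.single (p (i, !τ i)) 1 + oppositeExponent p (Finset.univ.erase i) τ :=
  (Finset.add_sum_erase _ _ (Finset.mem_univ i)).symm

theorem oppositeExponent_ne_zero_iff {v : V} :
    oppositeExponent p s τ v ≠ 0 ↔ ∃ i ∈ s, p (i, !τ i) = v := by
  classical
  simp [oppositeExponent, Finsupp.single_apply]

theorem degree_oppositeExponent : (oppositeExponent p s τ).degree = s.card := by
  simp [oppositeExponent]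

variable [DecidableEq V]

theorem transversal_congr (h : ∀ i ∈ s, τ i = τ' i) : transversal p s τ = transversal p s τ' :=
  Finset.image_congr fun i hi => by rw [h i hi]

theorem transversal_univ (i : Fin r) : transversal p Finset.univ τ =
    insert (p (i, τ i)) (transversal p (Finset.univ.erase i) τ) := by
  conv_lhs => rw [transversal, ← Finset.insert_erase (Finset.mem_univ i), Finset.image_insert]
  rfl

theorem mem_transversal {v : V} : v ∈ transversal p s τ ↔ ∃ i ∈ s, p (i, τ i) = v := by
  simp [transversal]

theorem apply_mem_transversal (hp : Function.Injective p) {i : Fin r} {b : Bool} :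
    p (i, b) ∈ transversal p s τ ↔ i ∈ s ∧ b = τ i := by
  rw [mem_transversal]
  refine ⟨fun ⟨j, hj, h⟩ => ?_, fun ⟨hi, h⟩ => ⟨i, hi, h ▸ rfl⟩⟩
  obtain ⟨rfl, rfl⟩ := Prod.mk.inj (hp h)
  exact ⟨hj, rfl⟩

theorem card_transversal (hp : Function.Injective p) : (transversal p s τ).card = s.card :=
  Finset.card_image_of_injective s fun _ _ h => (Prod.mk.inj (hp h)).1

end Transversal

section KoszulFunctional

theorem uncurry_nat_bit_injective (r : ℕ) :
    Function.Injective fun x : Fin r × Bool => Nat.bit x.2 x.1 := by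
  rintro ⟨i, b⟩ ⟨j, b'⟩ h
  have hij := congrArg Nat.div2 h
  have hb := congrArg Nat.bodd h
  simp only [Nat.div2_bit, Nat.bodd_bit] at hij hb
  rw [Fin.ext hij, hb]

variable {V K : Type} [DecidableEq V] [CommRing K] {r : ℕ} {p : Fin r × Bool → V} {ρ : V → ℕ}

theorem koszulSign_transversal_erase (hρp : ∀ i b, ρ (p (i, b)) = Nat.bit b i) (i : Fin r)
    (τ : Fin r → Bool) (b b' : Bool) :
    koszulSign ρ (transversal p (Finset.univ.erase i) τ) (p (i, b)) =
      koszulSign ρ (transversal p (Finset.univ.erase i) τ) (p (i, b')) := by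
  refine congrArg (fun t : Finset V => (-1 : ℤ) ^ t.card) (Finset.filter_congr fun v hv => ?_)
  obtain ⟨j, hj, rfl⟩ := mem_transversal.1 hv
  have : (j : ℕ) ≠ i := Fin.val_ne_of_ne (Finset.ne_of_mem_erase hj)
  rw [hρp, hρp, hρp, Nat.bit_val, Nat.bit_val, Nat.bit_val]
  have := (τ j).toNat_le
  have := b.toNat_le
  have := b'.toNat_le
  omega

variable [Fintype V]

theorem coeff_koszulDiff_transversal (hp : Function.Injective p) (w : Finset V → MvPolynomial V K)
    (τ : Fin r → Bool) :
    coeff (oppositeExponent p Finset.univ τ)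
        (koszulDiff ρ (X (R := K)) w (transversal p Finset.univ τ)) =
      ∑ i, koszulSign ρ (transversal p Finset.univ τ) (p (i, !τ i)) •
        coeff (oppositeExponent p (Finset.univ.erase i) τ)
          (w (insert (p (i, !τ i)) (transversal p Finset.univ τ))) := by
  have inj : Function.Injective fun i => p (i, !τ i) := fun i j h => (Prod.mk.inj (hp h)).1
  have coeff_zsmul (m : V →₀ ℕ) (a : ℤ) (q : MvPolynomial V K) : coeff m (a • q) = a • coeff m q :=
    map_zsmul (coeffAddMonoidHom m) a q
  rw [koszulDiff, coeff_sum, ← Finset.sum_subset (s₁ := Finset.univ.image fun i => p (i, !τ i)),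
    Finset.sum_image inj.injOn]
  · refine Finset.sum_congr rfl fun i _ => ?_
    rw [coeff_zsmul, smul_eq_mul, oppositeExponent_univ i, coeff_X_mul]
  · refine fun v hv => Finset.mem_compl.2 fun hvτ => ?_
    obtain ⟨i, -, rfl⟩ := Finset.mem_image.1 hv
    simpa using (apply_mem_transversal hp).1 hvτ
  · intro v _ hv
    rw [coeff_zsmul, smul_eq_mul, coeff_X_mul', if_neg, smul_zero]
    rw [Finsupp.mem_support_iff, oppositeExponent_ne_zero_iff]
    exact fun ⟨i, hi, h⟩ => hv (Finset.mem_image.2 ⟨i, hi, h⟩)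

-- Exchanging the two vertices of one pair reverses the sign, because they are consecutive for `ρ`.
theorem sum_coeff_koszulDiff_transversal (hp : Function.Injective p)
    (hρp : ∀ i b, ρ (p (i, b)) = Nat.bit b i) (w : Finset V → MvPolynomial V K) :
    ∑ τ, coeff (oppositeExponent p Finset.univ τ)
      (koszulDiff ρ (X (R := K)) w (transversal p Finset.univ τ)) = 0 := by
  rw [Finset.sum_congr rfl fun τ _ => coeff_koszulDiff_transversal hp w τ, Finset.sum_sigma']
  refine Finset.sum_involution (fun x _ => ⟨Function.update x.1 x.2 (!x.1 x.2), x.2⟩) ?_ ?_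
    (fun _ _ => by simp) (fun _ _ => by simp)
  · rintro ⟨τ, i⟩ -
    have update_eq : ∀ j ∈ Finset.univ.erase i, Function.update τ i (!τ i) j = τ j :=
      fun j hj => Function.update_of_ne (Finset.ne_of_mem_erase hj) _ _
    have notMem (b : Bool) : p (i, b) ∉ transversal p (Finset.univ.erase i) τ := fun h => by
      simpa using (apply_mem_transversal hp).1 h
    simp only [transversal_univ i, oppositeExponent_congr update_eq, transversal_congr update_eq,
      Function.update_self, Bool.not_not]
    rw [Finset.insert_comm, ← add_smul, koszulSign_insert (notMem _), koszulSign_insert (notMem _),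
      koszulSign_transversal_erase hρp i τ (!τ i) (τ i), ← add_mul, hρp, hρp]
    cases τ i <;> simp
  · rintro ⟨τ, i⟩ - - h
    have := congrFun (congrArg Sigma.fst h) i
    simp at this

end KoszulFunctional

section MatchingCycle

variable {V K : Type} [Field K] {G : SimpleGraph V} {r : ℕ} {p : Fin r × Bool → V}

theorem X_mul_monomial_mem_graphIdeal (hadj : ∀ i, G.Adj (p (i, true)) (p (i, false)))
    (i : Fin r) : X (p (i, true)) * monomial (oppositeExponent p Finset.univ fun _ => true) 1 ∈
      graphIdeal K G := by
  have edge_mem : X (p (i, true)) * X (p (i, false)) ∈ graphIdeal K G :=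
    Ideal.subset_span ⟨_, _, hadj i, rfl⟩
  rw [oppositeExponent_univ i, Bool.not_true, monomial_single_add, pow_one, ← mul_assoc]
  exact Ideal.mul_mem_right _ _ edge_mem

theorem coeff_oppositeExponent_of_mem_graphIdeal [Finite V]
    (hind : ∀ i j b b', G.Adj (p (i, b)) (p (j, b')) → i = j) (s : Finset (Fin r))
    (τ : Fin r → Bool) {q : MvPolynomial V K} (hq : q ∈ graphIdeal K G) :
    coeff (oppositeExponent p s τ) q = 0 := by
  cases nonempty_fintype V
  by_contra hne
  rw [graphIdeal_eq_edgeVarIdeal, mem_edgeVarIdeal] at hq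
  obtain ⟨w, hw, -⟩ | ⟨u, -, v, -, huv, hu, hv⟩ := hq _ hne
  · exact Finset.notMem_empty w hw
  · obtain ⟨i, -, rfl⟩ := oppositeExponent_ne_zero_iff.1 hu
    obtain ⟨j, -, rfl⟩ := oppositeExponent_ne_zero_iff.1 hv
    obtain rfl := hind _ _ _ _ huv
    exact huv.ne rfl

variable [DecidableEq V]

/-- The Koszul chain of degree `r` that is the product of the `p (i, false)` at the set of the
`p (i, true)`. It is a cycle modulo the edge ideal if each `p (i, true)` is adjacent to
`p (i, false)`. -/
noncomputable def matchingChain (K : Type) [Field K] (p : Fin r × Bool → V) :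
    Finset V → MvPolynomial V K :=
  Pi.single (transversal p Finset.univ fun _ => true)
    (monomial (oppositeExponent p Finset.univ fun _ => true) 1)

theorem isHomogeneous_matchingChain (T : Finset V) : (matchingChain K p T).IsHomogeneous r := by
  obtain rfl | hT := eq_or_ne T (transversal p Finset.univ fun _ => true)
  · rw [matchingChain, Pi.single_eq_same]
    exact isHomogeneous_monomial _ (degree_oppositeExponent.trans (Finset.card_fin r))
  · rw [matchingChain, Pi.single_eq_of_ne hT]
    exact isHomogeneous_zero _ _ _

theorem koszulDiff_matchingChain_mem [Fintype V] {ρ : V → ℕ}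
    (hadj : ∀ i, G.Adj (p (i, true)) (p (i, false))) (T : Finset V) :
    koszulDiff ρ (X (R := K)) (matchingChain K p) T ∈ graphIdeal K G := by
  refine sum_mem fun v _ => zsmul_mem ?_ _
  by_cases hT : insert v T = transversal p Finset.univ fun _ => true
  · obtain ⟨i, -, rfl⟩ := mem_transversal.1 (hT ▸ Finset.mem_insert_self v T)
    rw [hT, matchingChain, Pi.single_eq_same]
    exact X_mul_monomial_mem_graphIdeal hadj i
  · rw [matchingChain, Pi.single_eq_of_ne hT, smul_zero]
    exact zero_mem _

theorem sum_coeff_matchingChain (hp : Function.Injective p) :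
    ∑ τ, coeff (oppositeExponent p Finset.univ τ)
      (matchingChain K p (transversal p Finset.univ τ)) = 1 := by
  rw [Finset.sum_eq_single fun _ => true, matchingChain, Pi.single_eq_same, coeff_monomial,
    if_pos rfl]
  · intro τ _ hτ
    rw [matchingChain, Pi.single_eq_of_ne, coeff_zero]
    refine fun h => hτ (funext fun i => ?_)
    have : p (i, τ i) ∈ transversal p Finset.univ fun _ => true :=
      h ▸ (apply_mem_transversal hp).2 ⟨Finset.mem_univ i, rfl⟩
    exact ((apply_mem_transversal hp).1 this).2
  · exact fun h => absurd (Finset.mem_univ _) h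

end MatchingCycle

section InducedMatching

variable {V K : Type} [Finite V] [Field K] {G : SimpleGraph V} {r c : ℕ}

theorem HasRegularityLE.le_of_injective (h : HasRegularityLE (graphIdeal K G) c)
    {p : Fin r × Bool → V} (hp : Function.Injective p)
    (hadj : ∀ i, G.Adj (p (i, true)) (p (i, false)))
    (hind : ∀ i j b b', G.Adj (p (i, b)) (p (j, b')) → i = j) : r ≤ c := by
  classical
  cases nonempty_fintype V
  obtain ⟨ℓ, hℓ⟩ := h
  by_contra! hcr
  obtain ⟨ρ, hρ, hρp⟩ := exists_injective_nat_comp_eq hp (uncurry_nat_bit_injective r)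
  let mk := (graphIdeal K G).mkQ
  have mk_koszulDiff (z : Finset V → MvPolynomial V K) (T : Finset V) :
      mk (koszulDiff ρ (X (R := K)) z T) = koszulDiff ρ (X (R := K)) (fun T => mk (z T)) T :=
    map_koszulDiff mk z T
  obtain ⟨w, hw⟩ := hℓ.exists_koszulDiff_eq (i := r) (z := fun T => mk (matchingChain K p T)) hρ
    (fun T _ => ⟨_, mem_twistedPiece_zero.2 (isHomogeneous_matchingChain T), rfl⟩)
    (fun T _ => by
      rw [← mk_koszulDiff]
      exact (Submodule.Quotient.mk_eq_zero _).2 (koszulDiff_matchingChain_mem hadj T)) hcr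
  choose w' hw' using fun T => Submodule.mkQ_surjective _ (w T)
  obtain rfl : (fun T => mk (w' T)) = w := funext hw'
  have sub_mem {T : Finset V} (hT : T.card = r) :
      matchingChain K p T - koszulDiff ρ (X (R := K)) w' T ∈ graphIdeal K G := by
    rw [← Submodule.Quotient.mk_eq_zero, ← Submodule.mkQ_apply, map_sub, sub_eq_zero]
    exact ((mk_koszulDiff w' T).trans (hw T hT)).symm
  refine one_ne_zero (α := K) ?_
  rw [← sum_coeff_matchingChain hp,
    ← sum_coeff_koszulDiff_transversal hp (fun i b => hρp (i, b)) w']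
  refine Finset.sum_congr rfl fun τ _ => sub_eq_zero.1 ?_
  rw [← coeff_sub]
  exact coeff_oppositeExponent_of_mem_graphIdeal hind _ _
    (sub_mem ((card_transversal hp).trans (Finset.card_fin r)))

theorem HasRegularityLE.le_of_isInducedMatching [DecidableEq V]
    (h : HasRegularityLE (graphIdeal K G) c) {f : Fin r → V × V} (hf : G.IsInducedMatching f) :
    r ≤ c := by
  rw [isInducedMatching_iff] at hf
  let p (x : Fin r × Bool) : V := if x.2 then (f x.1).1 else (f x.1).2
  have p_mem (i : Fin r) (b : Bool) : p (i, b) ∈ ({(f i).1, (f i).2} : Finset V) := by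
    cases b <;> simp [p]
  have separated {i j : Fin r} (hij : i ≠ j) (b b' : Bool) :=
    hf.2 i j hij _ (p_mem i b) _ (p_mem j b')
  refine h.le_of_injective (p := p) ?_ hf.1 fun i j b b' huv => ?_
  · rintro ⟨i, b⟩ ⟨j, b'⟩ heq
    obtain rfl : i = j := by
      by_contra hij
      exact (separated hij b b').1 heq
    have := (hf.1 i).ne
    cases b <;> cases b' <;> simp_all [p]
  · by_contra hij
    exact (separated hij b b').2 huv

end InducedMatching

/-! ### Face ideals -/

section FaceIdeal

variable {σ K : Type} [CommRing K] {F F' : Set σ} {v : σ}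

/-- The face ideal of a set `F` of variables, generated by the variables outside `F`. It is defined
as the kernel of `restrictVars F`. -/
noncomputable def faceIdeal (K : Type) [CommRing K] (F : Set σ) : Ideal (MvPolynomial σ K) :=
  RingHom.ker (restrictVars F)

theorem mem_faceIdeal {p : MvPolynomial σ K} :
    p ∈ faceIdeal K F ↔ ∀ m, coeff m p ≠ 0 → ¬ ↑m.support ⊆ F := by
  simp only [faceIdeal, RingHom.mem_ker, MvPolynomial.ext_iff, coeff_restrictVars, coeff_zero]
  exact forall_congr' fun m => by split_ifs <;> simp [*]

instance [IsDomain K] : (faceIdeal K F).IsPrime :=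
  RingHom.ker_isPrime _

theorem faceIdeal_anti (h : F ⊆ F') : faceIdeal K F' ≤ faceIdeal K F := fun _ hp =>
  mem_faceIdeal.2 fun m hm hF => mem_faceIdeal.1 hp m hm (hF.trans h)

theorem X_mem_faceIdeal [Nontrivial K] : (X v : MvPolynomial σ K) ∈ faceIdeal K F ↔ v ∉ F := by
  rw [faceIdeal, RingHom.mem_ker]
  by_cases hv : v ∈ F
  · simp [restrictVars_X_of_mem hv, hv, X_ne_zero]
  · simp [restrictVars_X_of_notMem hv, hv]

theorem sub_restrictVars_mem_faceIdeal (p : MvPolynomial σ K) :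
    p - restrictVars F p ∈ faceIdeal K F := by
  rw [mem_faceIdeal]
  intro m hm hF
  simp [coeff_restrictVars, hF] at hm

theorem restrictVars_mem_faceIdeal {p : MvPolynomial σ K} (hp : p ∈ faceIdeal K (F ∩ F')) :
    restrictVars F p ∈ faceIdeal K F' := by
  classical
  rw [mem_faceIdeal]
  intro m hm hmF'
  rw [coeff_restrictVars, Ne, ite_eq_right_iff, Classical.not_imp] at hm
  exact mem_faceIdeal.1 hp m hm.2 (Set.subset_inter hm.1 hmF')

theorem exists_sub_X_mul_mem_faceIdeal_insert {p : MvPolynomial σ K} (hp : p ∈ faceIdeal K F) :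
    ∃ a, p - X v * a ∈ faceIdeal K (insert v F) := by
  classical
  have X_dvd : X v ∣ restrictVars (insert v F) p := by
    rw [X_dvd_iff_modMonomial_eq_zero]
    ext m
    by_cases h : Finsupp.single v 1 ≤ m
    · exact coeff_modMonomial_of_le _ h
    · rw [coeff_modMonomial_of_not_le _ h, coeff_restrictVars, coeff_zero, ite_eq_right_iff]
      intro hF
      by_contra hm
      refine mem_faceIdeal.1 hp m hm fun u hu => (hF hu).resolve_left ?_
      rintro rfl
      exact h (by simpa [Finsupp.single_le_iff, Nat.one_le_iff_ne_zero] using hu)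
  obtain ⟨a, ha⟩ := X_dvd
  exact ⟨a, ha ▸ sub_restrictVars_mem_faceIdeal p⟩

theorem notMem_faceIdeal_of_sub_one_mem [IsDomain K] {p : MvPolynomial σ K}
    (hp : p - 1 ∈ faceIdeal K ∅) : p ∉ faceIdeal K F := fun hpF =>
  (Ideal.ne_top_iff_one _).1 (Ideal.IsPrime.ne_top inferInstance) <|
    sub_sub_cancel p 1 ▸ sub_mem (faceIdeal_anti (Set.empty_subset F) hpF) hp

theorem killCompl_comp_restrictVars :
    (killCompl (Subtype.val_injective (p := (· ∈ F)))).comp (restrictVars F) =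
      killCompl (R := K) Subtype.val_injective := by
  refine algHom_ext fun v => ?_
  rw [AlgHom.comp_apply]
  by_cases hv : v ∈ F
  · rw [restrictVars_X_of_mem hv]
  · rw [restrictVars_X_of_notMem hv, map_zero, killCompl, aeval_X,
      dif_neg (by simpa using hv)]

theorem card_le_ringKrullDim_quotient [IsNoetherianRing K] [Nontrivial K] {F : Finset σ}
    {J : Ideal (MvPolynomial σ K)} (hJ : J ≤ faceIdeal K F) :
    (F.card : WithBot ℕ∞) ≤ ringKrullDim (MvPolynomial σ K ⧸ J) := by
  let restrict : MvPolynomial σ K →ₐ[K] MvPolynomial (F : Set σ) K :=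
    killCompl Subtype.val_injective
  have restrict_eq_zero (p : MvPolynomial σ K) (hp : p ∈ J) : restrict p = 0 := by
    have := DFunLike.congr_fun (killCompl_comp_restrictVars (K := K) (F := (F : Set σ))) p
    rw [← this, AlgHom.comp_apply, show restrictVars (F : Set σ) p = 0 from hJ hp, map_zero]
  have lift_surjective :
      Function.Surjective (Ideal.Quotient.lift J restrict.toRingHom restrict_eq_zero) :=
    fun q => ⟨Ideal.Quotient.mk J (rename Subtype.val q), killCompl_rename_app _ _⟩
  calc (F.card : WithBot ℕ∞) ≤ ringKrullDim K + Nat.card (F : Set σ) := by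
        simpa using le_add_of_nonneg_left (a := (F.card : WithBot ℕ∞))
          ringKrullDim_nonneg_of_nontrivial
    _ = ringKrullDim (MvPolynomial (F : Set σ) K) := ringKrullDim_of_isNoetherianRing.symm
    _ ≤ ringKrullDim (MvPolynomial σ K ⧸ J) := ringKrullDim_le_of_surjective _ lift_surjective

end FaceIdeal

section GraphIdeal

variable {V K : Type} [Field K] {G : SimpleGraph V}

theorem graphIdeal_le_faceIdeal {F : Set V} (hF : G.IsIndepSet F) :
    graphIdeal K G ≤ faceIdeal K F := by
  rw [graphIdeal, Ideal.span_le]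
  rintro _ ⟨u, v, huv, rfl⟩
  by_cases hu : u ∈ F
  · have hv : v ∉ F := fun hv => hF hu hv huv.ne huv
    exact Ideal.mul_mem_left _ _ (X_mem_faceIdeal.2 hv)
  · exact Ideal.mul_mem_right _ _ (X_mem_faceIdeal.2 hu)

theorem mem_graphIdeal_of_forall_mem_faceIdeal [Finite V] {p : MvPolynomial V K}
    (h : ∀ F : Finset V, G.IsIndepSet F → p ∈ faceIdeal K (F : Set V)) : p ∈ graphIdeal K G := by
  cases nonempty_fintype V
  rw [graphIdeal_eq_edgeVarIdeal, mem_edgeVarIdeal]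
  intro m hm
  have not_isIndepSet : ¬ G.IsIndepSet (m.support : Set V) := fun hind =>
    mem_faceIdeal.1 (h m.support hind) m hm subset_rfl
  simp only [SimpleGraph.IsIndepSet, Set.Pairwise] at not_isIndepSet
  push Not at not_isIndepSet
  obtain ⟨u, hu, v, hv, -, huv⟩ := not_isIndepSet
  exact Or.inr ⟨u, Finset.mem_univ u, v, Finset.mem_univ v, huv, Finsupp.mem_support_iff.1 hu,
    Finsupp.mem_support_iff.1 hv⟩

end GraphIdeal

/-! ### Vanishing of `Ext` near a maximal ideal -/

section ExtVanishing

open CategoryTheory Abelian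

variable {R : Type} [CommRing R] {m : Ideal R} {A A' B B₁ B₂ B₃ : Type} [AddCommGroup A]
  [Module R A] [AddCommGroup A'] [Module R A'] [AddCommGroup B] [Module R B] [AddCommGroup B₁]
  [Module R B₁] [AddCommGroup B₂] [Module R B₂] [AddCommGroup B₃] [Module R B₃] {i : ℕ}

/-- An element of `1 + m` kills `Ext^i(A, B)`. For finite modules over a Noetherian ring and `m`
maximal this says that the localization of `Ext^i(A, B)` at `m` vanishes. -/
def ExtVanishesNear (m : Ideal R) (A B : Type) [AddCommGroup A] [Module R A] [AddCommGroup B]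
    [Module R B] (i : ℕ) : Prop :=
  ∃ s : R, s - 1 ∈ m ∧ ∀ x : Ext (ModuleCat.of R A) (ModuleCat.of R B) i, s • x = 0

theorem mul_sub_one_mem {s t : R} (hs : s - 1 ∈ m) (ht : t - 1 ∈ m) : s * t - 1 ∈ m := by
  rw [show s * t - 1 = s * (t - 1) + (s - 1) by ring]
  exact m.add_mem (m.mul_mem_left _ ht) hs

theorem ExtVanishesNear.of_smul_eq_zero {s : R} (hs : s - 1 ∈ m) (h : ∀ b : B, s • b = 0) :
    ExtVanishesNear m A B i := by
  refine ⟨s, hs, fun x => ?_⟩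
  have smul_id_eq_zero : s • 𝟙 (ModuleCat.of R B) = 0 := by
    ext b
    exact h b
  rw [Ext.smul_eq_comp_mk₀, smul_id_eq_zero, Ext.mk₀_zero, Ext.comp_zero]

theorem ExtVanishesNear.of_subsingleton [Subsingleton B] : ExtVanishesNear m A B i :=
  .of_smul_eq_zero (s := 1) (by simp) fun _ => Subsingleton.elim _ _

theorem ExtVanishesNear.of_exact {f : B₁ →ₗ[R] B₂} {g : B₂ →ₗ[R] B₃} (hf : Function.Injective f)
    (hg : Function.Surjective g) (hfg : Function.Exact f g)
    (h₁ : ExtVanishesNear m A B₁ i) (h₃ : ExtVanishesNear m A B₃ i) :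
    ExtVanishesNear m A B₂ i := by
  obtain ⟨s, hs, smul_eq_zero₁⟩ := h₁
  obtain ⟨t, ht, smul_eq_zero₃⟩ := h₃
  refine ⟨s * t, mul_sub_one_mem hs ht, fun x => ?_⟩
  have shortExact := ModuleCat.shortComplex_shortExact
    (ModuleCat.shortComplexOfCompEqZero f g hfg.linearMap_comp_eq_zero) hfg hf hg
  obtain ⟨y, hy⟩ := Ext.covariant_sequence_exact₂ (ModuleCat.of R A) shortExact (t • x) <| by
    rw [Ext.smul_comp]
    exact smul_eq_zero₃ _
  rw [mul_smul, ← hy, ← Ext.smul_comp, show s • y = 0 from smul_eq_zero₁ y, Ext.zero_comp]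

theorem ExtVanishesNear.congr_right (e : B ≃ₗ[R] B₁) (h : ExtVanishesNear m A B i) :
    ExtVanishesNear m A B₁ i :=
  .of_exact (g := (0 : B₁ →ₗ[R] PUnit)) e.injective (fun _ => ⟨0, rfl⟩)
    (fun b => ⟨fun _ => e.surjective b, fun _ => rfl⟩) h .of_subsingleton

theorem ExtVanishesNear.of_quotient {M : Type} [AddCommGroup M] [Module R M] {S T : Submodule R M}
    (hST : S ≤ T) (h : ExtVanishesNear m A (subQuot S T) i) (hT : ExtVanishesNear m A (M ⧸ T) i) :
    ExtVanishesNear m A (M ⧸ S) i := by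
  refine .of_exact (f := Submodule.mapQ (S.comap T.subtype) S T.subtype le_rfl)
    (g := Submodule.factor hST) ?_ (Submodule.factor_surjective hST) ?_ h hT
  · rw [← LinearMap.ker_eq_bot, Submodule.ker_mapQ, Submodule.mkQ_map_self]
  · rw [LinearMap.exact_iff, Submodule.range_mapQ, Submodule.range_subtype, Submodule.factor,
      Submodule.ker_mapQ, Submodule.comap_id]

theorem ExtVanishesNear.of_exact_lsmul [IsNoetherianRing R] [Module.Finite R A] [Module.Finite R B]
    {x : R} (hx : x ∈ m) (hreg : Function.Injective (LinearMap.lsmul R A x)) {g : A →ₗ[R] A'}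
    (hg : Function.Surjective g) (hxg : Function.Exact (LinearMap.lsmul R A x) g)
    (h : ExtVanishesNear m A' B (i + 1)) : ExtVanishesNear m A B i := by
  have shortExact := ModuleCat.shortComplex_shortExact
    (ModuleCat.shortComplexOfCompEqZero _ g hxg.linearMap_comp_eq_zero) hxg hreg hg
  obtain ⟨s, hs, smul_eq_zero⟩ := h
  let E := Ext (ModuleCat.of R A) (ModuleCat.of R B) i
  -- Nakayama's lemma reduces the claim to `E = m • E`.
  have mem_smul_top (y : E) : y ∈ m • (⊤ : Submodule R E) := by
    obtain ⟨z, hz⟩ := Ext.contravariant_sequence_exact₁ shortExact (ModuleCat.of R B) (s • y)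
      (Nat.add_comm 1 i) (by rw [Ext.comp_smul]; exact smul_eq_zero _)
    have smul_y : s • y = x • z := by
      change (Ext.mk₀ (x • 𝟙 (ModuleCat.of R A))).comp z _ = _ at hz
      rw [← hz, Ext.mk₀_smul, Ext.smul_comp, Ext.mk₀_id_comp]
    rw [show y = x • z - (s - 1) • y by rw [← smul_y]; module]
    exact sub_mem (Submodule.smul_mem_smul hx trivial) (Submodule.smul_mem_smul hs trivial)
  obtain ⟨t, ht, smul_top_eq_zero⟩ :=
    Submodule.exists_sub_one_mem_and_smul_eq_zero_of_fg_of_le_smul m (⊤ : Submodule R E)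
      Module.Finite.fg_top fun y _ => mem_smul_top y
  exact ⟨t, ht, fun y => smul_top_eq_zero y trivial⟩

theorem ExtVanishesNear.of_isRegular [IsNoetherianRing R] [Module.Finite R B] {rs : List R}
    (mem : ∀ r ∈ rs, r ∈ m) (reg : RingTheory.Sequence.IsRegular B rs) (hi : i < rs.length) :
    ExtVanishesNear m (R ⧸ m) B i := by
  by_cases h : m • (⊤ : Submodule R B) = ⊤
  · obtain ⟨t, ht, smul_top_eq_zero⟩ :=
      Submodule.exists_sub_one_mem_and_smul_eq_zero_of_fg_of_le_smul m (⊤ : Submodule R B)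
        Module.Finite.fg_top h.ge
    exact .of_smul_eq_zero ht fun b => smul_top_eq_zero b trivial
  · have support_eq : Module.support R (R ⧸ m) = PrimeSpectrum.zeroLocus m := by
      rw [Module.support_eq_zeroLocus, Ideal.annihilator_quotient]
    have := ModuleCat.subsingleton_ext_of_exists_isRegular m (ModuleCat.of R (R ⧸ m))
      support_eq.subset (ModuleCat.of R B) (lt_top_iff_ne_top.2 h) rs mem reg i hi
    exact ⟨1, by simp, fun _ => Subsingleton.elim _ _⟩

theorem ExtVanishesNear.exists_smul_hom_eq_zero (h : ExtVanishesNear m A B 0) :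
    ∃ s : R, s - 1 ∈ m ∧ ∀ f : A →ₗ[R] B, s • f = 0 := by
  obtain ⟨s, hs, smul_eq_zero⟩ := h
  refine ⟨s, hs, fun f => ?_⟩
  have smul_f := smul_eq_zero (Ext.mk₀ (ModuleCat.ofHom f))
  rw [← Ext.mk₀_smul, Ext.mk₀_eq_zero_iff] at smul_f
  exact congrArg ModuleCat.Hom.hom smul_f

theorem ExtVanishesNear.exists_smul_hom_extends {Q : Ideal R}
    (h : ExtVanishesNear m (R ⧸ Q) B 1) :
    ∃ s : R, s - 1 ∈ m ∧ ∀ f : Q →ₗ[R] B, ∃ b : B, ∀ q : Q, s • f q = (q : R) • b := by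
  obtain ⟨s, hs, smul_eq_zero⟩ := h
  refine ⟨s, hs, fun f => ?_⟩
  have shortExact := ModuleCat.shortComplex_shortExact
    (ModuleCat.shortComplexOfCompEqZero Q.subtype Q.mkQ
      (LinearMap.exact_subtype_mkQ Q).linearMap_comp_eq_zero)
    (LinearMap.exact_subtype_mkQ Q) Q.subtype_injective Q.mkQ_surjective
  obtain ⟨z, hz⟩ := Ext.contravariant_sequence_exact₁ shortExact (ModuleCat.of R B)
    (s • Ext.mk₀ (ModuleCat.ofHom f)) (Nat.add_comm 1 0)
    (by rw [Ext.comp_smul]; exact smul_eq_zero _)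
  obtain ⟨f', rfl⟩ := (Ext.mk₀_bijective _ _).2 z
  rw [Ext.mk₀_comp_mk₀, ← Ext.mk₀_smul] at hz
  have restrict_f' := congrArg ModuleCat.Hom.hom ((Ext.mk₀_bijective _ _).1 hz)
  refine ⟨f'.hom (1 : R), fun q => ?_⟩
  calc s • f q = f'.hom (q : R) := (LinearMap.congr_fun restrict_f' q).symm
    _ = (q : R) • f'.hom (1 : R) := by rw [← map_smul, smul_eq_mul, mul_one]

end ExtVanishing

section Annihilation

variable {R B : Type} [CommRing R] [AddCommGroup B] [Module R B] {m : Ideal R}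

theorem ExtVanishesNear.exists_smul_eq_zero {Q : Ideal R} (h : ExtVanishesNear m (R ⧸ Q) B 0) :
    ∃ s : R, s - 1 ∈ m ∧ ∀ b : B, (∀ q ∈ Q, q • b = 0) → s • b = 0 := by
  obtain ⟨s, hs, smul_eq_zero⟩ := h.exists_smul_hom_eq_zero
  refine ⟨s, hs, fun b hb => ?_⟩
  have Q_le_ker : Q ≤ LinearMap.ker (LinearMap.toSpanSingleton R B b) := fun q hq => hb q hq
  have smul_lift := LinearMap.congr_fun (smul_eq_zero (Submodule.liftQ Q _ Q_le_ker)) (Q.mkQ 1)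
  rwa [LinearMap.smul_apply, Submodule.mkQ_apply, Submodule.liftQ_apply,
    LinearMap.toSpanSingleton_apply, one_smul] at smul_lift

theorem ExtVanishesNear.exists_smul_eq_zero_of_inf {ι : Type} {Q : ι → Ideal R} (L : Finset ι)
    (h : ∀ i ∈ L, ExtVanishesNear m (R ⧸ Q i) B 0) :
    ∃ s : R, s - 1 ∈ m ∧ ∀ b : B, (∀ q ∈ L.inf Q, q • b = 0) → s • b = 0 := by
  classical
  induction L using Finset.induction_on with
  | empty => exact ⟨1, by simp, fun b hb => hb 1 (by simp)⟩
  | insert i L _ ih =>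
    rw [Finset.forall_mem_insert] at h
    obtain ⟨s, hs, smul_eq_zero⟩ := ih h.2
    obtain ⟨t, ht, smul_eq_zero_of_Q⟩ := h.1.exists_smul_eq_zero
    refine ⟨t * s, mul_sub_one_mem ht hs, fun b hb => ?_⟩
    rw [mul_smul]
    refine smul_eq_zero_of_Q _ fun q hq => ?_
    rw [smul_comm]
    refine smul_eq_zero _ fun p hp => ?_
    rw [← mul_smul]
    refine hb _ ?_
    rw [Finset.inf_insert]
    exact ⟨Ideal.mul_mem_left _ _ hq, Ideal.mul_mem_right _ _ hp⟩

theorem exists_linearMap_of_mul_mem_sup {Q A P J : Ideal R} {s u : R}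
    (hs : ∀ y ∈ P ⊓ J, s * y ∈ A) (hu : ∀ q ∈ Q, u * q ∈ P ⊔ J) :
    ∃ φ : Q →ₗ[R] R ⧸ A, ∀ q : Q,
      ∃ y ∈ J, u * q - y ∈ P ∧ φ q = Ideal.Quotient.mk A (s * y) := by
  have exists_part (q : Q) : ∃ y ∈ J, u * q - y ∈ P := by
    obtain ⟨p, hp, y, hy, hpy⟩ := Submodule.mem_sup.1 (hu q q.2)
    exact ⟨y, hy, by rwa [← hpy, add_sub_cancel_right]⟩
  choose y hyJ hyP using exists_part
  have mk_eq {a b : R} (ha : a ∈ J) (hb : b ∈ J) (hab : a - b ∈ P) :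
      Ideal.Quotient.mk A (s * a) = Ideal.Quotient.mk A (s * b) := by
    rw [Ideal.Quotient.eq, ← mul_sub]
    exact hs _ ⟨hab, J.sub_mem ha hb⟩
  let φ : Q →ₗ[R] R ⧸ A :=
    { toFun q := Ideal.Quotient.mk A (s * y q)
      map_add' q q' := by
        rw [← map_add, ← mul_add]
        refine mk_eq (hyJ _) (J.add_mem (hyJ _) (hyJ _)) ?_
        convert P.sub_mem (P.add_mem (hyP q) (hyP q')) (hyP (q + q')) using 1
        push_cast
        ring
      map_smul' r q := by
        change _ = Ideal.Quotient.mk A (r * (s * y q))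
        rw [mul_left_comm]
        refine mk_eq (hyJ _) (J.mul_mem_left r (hyJ _)) ?_
        convert P.sub_mem (P.mul_mem_left r (hyP q)) (hyP (r • q)) using 1
        rw [Submodule.coe_smul, smul_eq_mul]
        ring }
  exact ⟨φ, fun q => ⟨y q, hyJ q, hyP q, rfl⟩⟩

/-- For `q` in `Q`, split `u * q` into a part from `P` and a part from `J`. The vanishing of
`Ext¹(R ⧸ Q, R ⧸ A)` makes the second part a multiple of `q`, so that `u` itself splits. -/
theorem ExtVanishesNear.exists_mul_mem_sup {Q A P J : Ideal R}
    (h : ExtVanishesNear m (R ⧸ Q) (R ⧸ A) 1) (hAP : A ≤ P) (hAJ : A ≤ J) {s u : R}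
    (hs : ∀ y ∈ P ⊓ J, s * y ∈ A) (hu : ∀ q ∈ Q, u * q ∈ P ⊔ J) (hP : P.colon Q ≤ P)
    (hJ : J.colon Q ≤ J) : ∃ t, t - 1 ∈ m ∧ t * (s * u) ∈ P ⊔ J := by
  obtain ⟨t, ht, hom_extends⟩ := h.exists_smul_hom_extends
  obtain ⟨φ, hφ⟩ := exists_linearMap_of_mul_mem_sup hs hu
  obtain ⟨c, hc⟩ := hom_extends φ
  obtain ⟨c, rfl⟩ := Ideal.Quotient.mk_surjective c
  have exists_part (q : R) (hq : q ∈ Q) : ∃ y ∈ J, u * q - y ∈ P ∧ t * (s * y) - q * c ∈ A := by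
    obtain ⟨y, hyJ, hyP, hφy⟩ := hφ ⟨q, hq⟩
    exact ⟨y, hyJ, hyP, Ideal.Quotient.eq.1 ((congrArg (t • ·) hφy).symm.trans (hc ⟨q, hq⟩))⟩
  have mem_J : c ∈ J := hJ <| Submodule.mem_colon.2 fun q hq => by
    obtain ⟨y, hyJ, -, hyA⟩ := exists_part q hq
    have := J.sub_mem (J.mul_mem_left t (J.mul_mem_left s hyJ)) (hAJ hyA)
    rwa [sub_sub_cancel, mul_comm] at this
  have sub_mem_P : t * (s * u) - c ∈ P := hP <| Submodule.mem_colon.2 fun q hq => by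
    obtain ⟨y, -, hyP, hyA⟩ := exists_part q hq
    convert P.add_mem (P.mul_mem_left (t * s) hyP) (hAP hyA) using 1
    rw [smul_eq_mul]
    ring
  exact ⟨t, ht, Submodule.mem_sup.2 ⟨_, sub_mem_P, c, mem_J, sub_add_cancel _ _⟩⟩

end Annihilation

/-! ### Sequentially Cohen–Macaulay face rings -/

section Filtration

variable {R M A : Type} [CommRing R] [AddCommGroup M] [Module R M] [AddCommGroup A] [Module R A]
  {m : Ideal R} {r : ℕ}

theorem exists_cut_of_monotone {α : Type*} [LinearOrder α] {f : Fin r → α} (hf : Monotone f)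
    (a : α) :
    ∃ j : Fin (r + 1), (∀ i, i.castSucc < j → f i < a) ∧ ∀ i, j ≤ i.castSucc → a ≤ f i := by
  obtain ⟨j, hj, j_min⟩ := wellFounded_lt.has_min {j : Fin (r + 1) | ∀ i, j ≤ i.castSucc → a ≤ f i}
    ⟨Fin.last r, fun i hi => absurd i.castSucc_lt_last hi.not_gt⟩
  refine ⟨j, fun i hi => ?_, hj⟩
  by_contra! hai
  exact j_min i.castSucc (fun i' hi' => hai.trans (hf (Fin.castSucc_le_castSucc_iff.1 hi'))) hi

theorem ExtVanishesNear.of_filtration {N : Fin (r + 1) → Submodule R M}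
    (hlast : N (Fin.last r) = ⊤) (hN : ∀ i : Fin r, N i.castSucc ≤ N i.succ) {j : Fin (r + 1)}
    {k : ℕ} (h : ∀ i : Fin r, j ≤ i.castSucc →
      ExtVanishesNear m A (subQuot (N i.castSucc) (N i.succ)) k) :
    ExtVanishesNear m A (M ⧸ N j) k := by
  suffices ∀ l, j ≤ l → ExtVanishesNear m A (M ⧸ N l) k from this j le_rfl
  intro l
  induction l using Fin.reverseInduction with
  | last =>
    intro _
    have : Subsingleton (M ⧸ N (Fin.last r)) := Submodule.Quotient.subsingleton_iff.2 hlast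
    exact .of_subsingleton
  | cast i ih => exact fun hi => .of_quotient (hN i) (h i hi) (ih (hi.trans i.castSucc_lt_succ.le))

theorem comap_mkQ_le_of_filtration {I P : Ideal R} [P.IsPrime] (hIP : I ≤ P)
    {N : Fin (r + 1) → Submodule R (R ⧸ I)} (hzero : N 0 = ⊥) {j : Fin (r + 1)}
    (h : ∀ i : Fin r, i.castSucc < j →
      ¬ Module.annihilator R (subQuot (N i.castSucc) (N i.succ)) ≤ P) :
    (N j).comap I.mkQ ≤ P := by
  suffices ∀ l ≤ j, (N l).comap I.mkQ ≤ P from this j le_rfl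
  intro l
  induction l using Fin.induction with
  | zero => rwa [hzero, Submodule.comap_bot, Submodule.ker_mkQ, imp_iff_right (Fin.zero_le j)]
  | succ i ih =>
    intro hi p hp
    have hij : i.castSucc < j := i.castSucc_lt_succ.trans_le hi
    obtain ⟨a, ha, haP⟩ := Set.not_subset.1 (h i hij)
    have smul_eq_zero := Module.mem_annihilator.1 ha (Submodule.Quotient.mk ⟨_, hp⟩)
    rw [← Submodule.Quotient.mk_smul, Submodule.Quotient.mk_eq_zero] at smul_eq_zero
    exact (Ideal.IsPrime.mem_or_mem ‹_› (ih hij.le smul_eq_zero)).resolve_left haP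

end Filtration

section FaceRing

variable {V K : Type} [Finite V] [Field K] {B : Type} [AddCommGroup B]
  [Module (MvPolynomial V K) B] [Module.Finite (MvPolynomial V K) B]

theorem ExtVanishesNear.faceIdeal_insert {F : Set V} {v : V} (hv : v ∉ F) {i : ℕ}
    (h : ExtVanishesNear (faceIdeal K (∅ : Set V)) (MvPolynomial V K ⧸ faceIdeal K F) B (i + 1)) :
    ExtVanishesNear (faceIdeal K (∅ : Set V)) (MvPolynomial V K ⧸ faceIdeal K (insert v F)) B
      i := by
  refine .of_exact_lsmul (x := X v) (X_mem_faceIdeal.2 (Set.notMem_empty v)) ?_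
    (g := Submodule.factor (faceIdeal_anti (Set.subset_insert v F)))
    (Submodule.factor_surjective _) ?_ h
  · rw [injective_iff_map_eq_zero]
    intro a ha
    obtain ⟨p, rfl⟩ := Ideal.Quotient.mk_surjective a
    have X_mul_mem : X v * p ∈ faceIdeal K (insert v F) := Ideal.Quotient.eq_zero_iff_mem.1 ha
    exact Ideal.Quotient.eq_zero_iff_mem.2 <|
      (Ideal.IsPrime.mem_or_mem inferInstance X_mul_mem).resolve_left
        fun hX => X_mem_faceIdeal.1 hX (Set.mem_insert v F)
  · intro a
    obtain ⟨p, rfl⟩ := Ideal.Quotient.mk_surjective a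
    constructor
    · intro hp
      obtain ⟨a, ha⟩ := exists_sub_X_mul_mem_faceIdeal_insert (v := v)
        (Ideal.Quotient.eq_zero_iff_mem.1 hp)
      exact ⟨Ideal.Quotient.mk _ a, (Ideal.Quotient.eq.2 ha).symm⟩
    · rintro ⟨a, ha⟩
      obtain ⟨a, rfl⟩ := Ideal.Quotient.mk_surjective a
      rw [← ha]
      exact Ideal.Quotient.eq_zero_iff_mem.2 (Ideal.mul_mem_right _ _ (X_mem_faceIdeal.2 hv))

end FaceRing

section SeqCM

variable {n : ℕ} {K : Type} [Field K] {B : Type} [AddCommGroup B]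
  [Module (MvPolynomial (Fin n) K) B]

theorem maxIdeal_le_faceIdeal_empty : maxIdeal n K ≤ faceIdeal K ∅ := by
  rw [maxIdeal, Ideal.span_le]
  rintro _ ⟨v, rfl⟩
  exact X_mem_faceIdeal.2 (Set.notMem_empty v)

theorem nat_sSup_mem_of_pos {S : Set ℕ} (h : 0 < sSup S) : sSup S ∈ S := by
  refine Nat.sSup_mem (Set.nonempty_iff_ne_empty.2 ?_) ?_
  · rintro rfl
    simp at h
  · by_contra hbdd
    exact h.ne' (Nat.sSup_of_not_bddAbove hbdd)

theorem exists_isRegular_of_depthR_pos (h : 0 < depthR n K B) :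
    ∃ rs : List (MvPolynomial (Fin n) K), rs.length = depthR n K B ∧ (∀ r ∈ rs, r ∈ maxIdeal n K) ∧
      RingTheory.Sequence.IsRegular B rs := by
  have depthR_mem : depthR n K B ∈ _ := nat_sSup_mem_of_pos h
  exact depthR_mem

theorem extVanishesNear_of_isCMmod [Module.Finite (MvPolynomial (Fin n) K) B]
    (hB : IsCMmod n K B) {d : ℕ} (hd : (d : WithBot ℕ∞) ≤ dimR n K B) (ρ : Finset (Fin n)) :
    ∀ i, i + ρ.card < d → ExtVanishesNear (faceIdeal K (∅ : Set (Fin n)))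
      (MvPolynomial (Fin n) K ⧸ faceIdeal K (ρ : Set (Fin n))) B i := by
  induction ρ using Finset.induction_on with
  | empty =>
    intro i hi
    rw [Finset.card_empty, add_zero] at hi
    rw [Finset.coe_empty]
    obtain hB | depth_eq_dim := hB
    · exact .of_subsingleton
    · have d_le_depth : d ≤ depthR n K B :=
        Nat.cast_le (α := WithBot ℕ∞).1 (hd.trans_eq depth_eq_dim.symm)
      obtain ⟨rs, hlength, hmem, hreg⟩ :=
        exists_isRegular_of_depthR_pos ((Nat.zero_le i).trans_lt (hi.trans_le d_le_depth))
      exact .of_isRegular (fun r hr => maxIdeal_le_faceIdeal_empty (hmem r hr)) hreg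
        (hlength ▸ hi.trans_le d_le_depth)
  | insert v ρ hv ih =>
    intro i hi
    rw [Finset.card_insert_of_notMem hv] at hi
    rw [Finset.coe_insert]
    exact .faceIdeal_insert (Finset.mem_coe.not.2 hv) (ih (i + 1) (by omega))

/-- In terms of the filtration, `J / I` collects the Cohen–Macaulay layers of dimension less than
`d`. -/
theorem exists_ideal_of_isSeqCM {I : Ideal (MvPolynomial (Fin n) K)} (h : IsSeqCM K I) (d : ℕ) :
    ∃ J, I ≤ J ∧
      (∀ (ρ : Finset (Fin n)) (i : ℕ), i + ρ.card < d →
        ExtVanishesNear (faceIdeal K (∅ : Set (Fin n)))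
          (MvPolynomial (Fin n) K ⧸ faceIdeal K (ρ : Set (Fin n))) (MvPolynomial (Fin n) K ⧸ J) i) ∧
      ∀ F : Finset (Fin n), d ≤ F.card → I ≤ faceIdeal K F → J ≤ faceIdeal K F := by
  obtain ⟨r, N, hzero, hlast, hN, -, isCM, dim_strictMono⟩ := h
  have dim_monotone : Monotone fun i : Fin r => dimR n K (subQuot (N i.castSucc) (N i.succ)) :=
    StrictMono.monotone fun i j => dim_strictMono i j
  obtain ⟨j, dim_lt, le_dim⟩ := exists_cut_of_monotone dim_monotone (d : WithBot ℕ∞)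
  have I_le : I ≤ (N j).comap I.mkQ := by
    simpa using Submodule.comap_mono (f := I.mkQ) (bot_le (a := N j))
  refine ⟨(N j).comap I.mkQ, I_le, fun ρ i hi => ?_, fun F hF hIF => ?_⟩
  · have vanish := ExtVanishesNear.of_filtration hlast hN fun k hk =>
      extVanishesNear_of_isCMmod (isCM k) (le_dim k hk) ρ i hi
    rw [← Submodule.map_comap_eq_of_surjective I.mkQ_surjective (N j)] at vanish
    exact vanish.congr_right (Submodule.quotientQuotientEquivQuotient I _ I_le)
  · refine comap_mkQ_le_of_filtration hIF hzero fun i hi hann => ?_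
    have := (card_le_ringKrullDim_quotient hann).trans_lt (dim_lt i hi)
    exact hF.not_gt (by exact_mod_cast this)

end SeqCM

section Connectivity

variable {n : ℕ} {K : Type} [Field K] {G : SimpleGraph (Fin n)}

/-- The independent sets of `G` of size at least `|F₁|`, apart from `F₁` itself. -/
def otherFaces {V : Type} (G : SimpleGraph V) (F₁ : Finset V) : Set (Finset V) :=
  {F | G.IsIndepSet F ∧ F ≠ F₁ ∧ F₁.card ≤ F.card}

/-- The ideal of the polynomials vanishing on all large faces of `G` other than `F₁`. -/
noncomputable def otherFacesIdeal (K : Type) [Field K] {V : Type} (G : SimpleGraph V)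
    (F₁ : Finset V) : Ideal (MvPolynomial V K) :=
  ⨅ F ∈ otherFaces G F₁, faceIdeal K F

theorem mem_otherFacesIdeal {V : Type} {G : SimpleGraph V} {F₁ : Finset V}
    {p : MvPolynomial V K} :
    p ∈ otherFacesIdeal K G F₁ ↔ ∀ F ∈ otherFaces G F₁, p ∈ faceIdeal K (F : Set V) := by
  simp only [otherFacesIdeal, Submodule.mem_iInf]

theorem colon_faceIdeal_le {V : Type} {F F' : Set V} (h : ¬ F ⊆ F') :
    (faceIdeal K F).colon (faceIdeal K F') ≤ faceIdeal K F := by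
  intro p hp
  obtain ⟨v, hvF, hvF'⟩ := Set.not_subset.1 h
  have mul_X_mem : p * X v ∈ faceIdeal K F :=
    Submodule.mem_colon.1 hp (X v) (X_mem_faceIdeal.2 hvF')
  exact (Ideal.IsPrime.mem_or_mem inferInstance mul_X_mem).resolve_right
    fun hX => X_mem_faceIdeal.1 hX hvF

theorem prod_X_mem_faceIdeal {V : Type} {F : Set V} {ρ : Finset V} :
    ∏ v ∈ ρ, X v ∈ faceIdeal K F ↔ ¬ ↑ρ ⊆ F := by
  rw [Ideal.IsPrime.prod_mem_iff, Set.not_subset]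
  simp only [X_mem_faceIdeal, Finset.mem_coe]

/-- The part of `R ⧸ I(G)` away from the large faces is killed by an element of `1 + m`, as it is
supported on the small faces, whose `Hom` into `R ⧸ J` vanishes near `m`. -/
theorem exists_mul_mem_of_forall_mem_faceIdeal {J : Ideal (MvPolynomial (Fin n) K)}
    (hJ : graphIdeal K G ≤ J) {d : ℕ}
    (h : ∀ F : Finset (Fin n), F.card < d → ExtVanishesNear (faceIdeal K (∅ : Set (Fin n)))
      (MvPolynomial (Fin n) K ⧸ faceIdeal K (F : Set (Fin n))) (MvPolynomial (Fin n) K ⧸ J) 0) :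
    ∃ s, s - 1 ∈ faceIdeal K (∅ : Set (Fin n)) ∧
      ∀ y, (∀ F : Finset (Fin n), G.IsIndepSet F → d ≤ F.card → y ∈ faceIdeal K (F : Set (Fin n))) →
        s * y ∈ J := by
  classical
  obtain ⟨s, hs, smul_eq_zero⟩ :=
    ExtVanishesNear.exists_smul_eq_zero_of_inf (Finset.univ.filter (Finset.card · < d))
      fun F hF => h F (Finset.mem_filter.1 hF).2
  refine ⟨s, hs, fun y hy => Ideal.Quotient.eq_zero_iff_mem.1 <|
    smul_eq_zero (Ideal.Quotient.mk J y) fun q hq => Ideal.Quotient.eq_zero_iff_mem.2 <|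
      hJ <| mem_graphIdeal_of_forall_mem_faceIdeal fun F hF => ?_⟩
  obtain hd | hd := le_or_gt d F.card
  · exact Ideal.mul_mem_left _ _ (hy F hF hd)
  · rw [Submodule.mem_finsetInf] at hq
    exact Ideal.mul_mem_right _ _ (hq F (by simpa using hd))

theorem prod_X_mul_mem_sup_otherFacesIdeal {V : Type} [DecidableEq V] {G : SimpleGraph V}
    {F₁ ρ : Finset V} (hinter : ∀ F ∈ otherFaces G F₁, ρ ⊆ F → F ∩ F₁ ⊆ ρ) {q : MvPolynomial V K}
    (hq : q ∈ faceIdeal K (ρ : Set V)) :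
    (∏ v ∈ ρ, X v) * q ∈ faceIdeal K (F₁ : Set V) ⊔ otherFacesIdeal K G F₁ := by
  have mul_sub_mem := Ideal.mul_mem_left (faceIdeal K (F₁ : Set V)) (∏ v ∈ ρ, X v)
    (sub_restrictVars_mem_faceIdeal q)
  refine Submodule.mem_sup.2 ⟨_, mul_sub_mem, (∏ v ∈ ρ, X v) * restrictVars F₁ q,
    mem_otherFacesIdeal.2 fun F hF => ?_, by ring⟩
  by_cases hρF : ρ ⊆ F
  · refine Ideal.mul_mem_left _ _ (restrictVars_mem_faceIdeal (faceIdeal_anti ?_ hq))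
    rw [Set.inter_comm, ← Finset.coe_inter]
    exact Finset.coe_subset.2 (hinter F hF hρF)
  · exact Ideal.mul_mem_right _ _ (prod_X_mem_faceIdeal.2 (Finset.coe_subset.not.2 hρF))

/-- Connectivity in codimension one. If all other large faces containing `ρ` met `F₁` in `ρ` only,
the monomial of `ρ` would split into a part vanishing on `F₁` and a part vanishing on the other
large faces, up to an element of `1 + m`; but both parts vanish on `ρ`. -/
theorem exists_ssubset_inter_of_isSeqCM (h : IsSeqCM K (graphIdeal K G)) {F₁ ρ : Finset (Fin n)}
    (hF₁ : G.IsIndepSet F₁) (hρ : ρ ⊆ F₁) (hcard : ρ.card + 2 ≤ F₁.card)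
    (hother : ∃ F ∈ otherFaces G F₁, ρ ⊆ F) : ∃ F ∈ otherFaces G F₁, ρ ⊂ F ∩ F₁ := by
  by_contra! hinter
  obtain ⟨A, graphIdeal_le_A, vanish, A_le⟩ := exists_ideal_of_isSeqCM h F₁.card
  obtain ⟨s, hs, mul_mem_A⟩ := exists_mul_mem_of_forall_mem_faceIdeal (d := F₁.card)
    graphIdeal_le_A fun F hF => vanish F 0 (by omega)
  have not_subset {F : Finset (Fin n)} (hF : F₁.card ≤ F.card) : ¬ (F : Set (Fin n)) ⊆ ρ :=
    fun hFρ => absurd (Finset.card_le_card (Finset.coe_subset.1 hFρ)) (by omega)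
  obtain ⟨t, ht, mul_mem_sup⟩ := (vanish ρ 1 (by omega)).exists_mul_mem_sup
    (P := faceIdeal K (F₁ : Set (Fin n))) (J := otherFacesIdeal K G F₁) (s := s)
    (u := ∏ v ∈ ρ, X v)
    (A_le F₁ le_rfl (graphIdeal_le_faceIdeal hF₁))
    (fun a ha => mem_otherFacesIdeal.2 fun F hF =>
      A_le F hF.2.2 (graphIdeal_le_faceIdeal hF.1) ha)
    (fun y hy => mul_mem_A y fun F hF hcardF => by
      obtain rfl | hne := eq_or_ne F F₁
      exacts [hy.1, mem_otherFacesIdeal.1 hy.2 F ⟨hF, hne, hcardF⟩])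
    (fun q hq => prod_X_mul_mem_sup_otherFacesIdeal (fun F hF hρF =>
      ((Finset.subset_inter hρF hρ).eq_of_not_ssubset (hinter F hF)).ge) hq)
    (colon_faceIdeal_le (not_subset le_rfl))
    (fun p hp => mem_otherFacesIdeal.2 fun F hF => colon_faceIdeal_le (not_subset hF.2.2)
      (Submodule.colon_mono (iInf₂_le F hF) subset_rfl hp))
  obtain ⟨F, hF, hρF⟩ := hother
  have sup_le : faceIdeal K F₁ ⊔ otherFacesIdeal K G F₁ ≤ faceIdeal K (ρ : Set (Fin n)) :=
    sup_le (faceIdeal_anti hρ) ((iInf₂_le F hF).trans (faceIdeal_anti hρF))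
  obtain htρ | hsuρ := Ideal.IsPrime.mem_or_mem inferInstance (sup_le mul_mem_sup)
  · exact notMem_faceIdeal_of_sub_one_mem ht htρ
  obtain hsρ | huρ := Ideal.IsPrime.mem_or_mem inferInstance hsuρ
  · exact notMem_faceIdeal_of_sub_one_mem hs hsρ
  · exact prod_X_mem_faceIdeal.1 huρ subset_rfl

end Connectivity

/-! ### The leaf property -/

section LinkOfUnion

variable {V : Type} [Fintype V] [DecidableEq V] {G : SimpleGraph V} {S C : Finset V}

theorem disjoint_linkVertices : Disjoint S (linkVertices G S) :=
  Finset.disjoint_right.2 fun _ hx => (mem_linkVertices.1 hx).1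

theorem isIndepSet_union_of_subset_linkVertices (hS : G.IsIndepSet S)
    (hC : C ⊆ linkVertices G S) (hCindep : G.IsIndepSet C) :
    G.IsIndepSet (S ∪ C : Finset V) := by
  rw [SimpleGraph.isIndepSet_iff, Finset.coe_union]
  refine Set.pairwise_union.2 ⟨hS, hCindep, fun w hw x hx _ => ?_⟩
  have not_adj := (mem_linkVertices.1 (hC hx)).2 w hw
  exact ⟨not_adj, mt G.adj_symm not_adj⟩

theorem subset_union_linkVertices (hC : G.IsIndepSet C) (hSC : S ⊆ C) :
    C ⊆ S ∪ linkVertices G S := by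
  intro x hx
  by_cases hxS : x ∈ S
  · exact Finset.mem_union_left _ hxS
  · refine Finset.mem_union_right _ (mem_linkVertices.2 ⟨hxS, fun w hw hwx => ?_⟩)
    exact hC (hSC hw) hx hwx.ne hwx

theorem exists_isIndepSet_linkVertices_nonisolated (hS : G.IsIndepSet S) :
    ∃ T : Finset V, G.IsIndepSet T ∧ ∀ x, x ∈ linkVertices G T ↔
      x ∈ linkVertices G S ∧ ∃ y ∈ linkVertices G S, G.Adj x y := by
  classical
  let isolated : Finset V := {x ∈ linkVertices G S | ∀ y ∈ linkVertices G S, ¬ G.Adj x y}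
  have mem_isolated {x : V} : x ∈ isolated ↔
      x ∈ linkVertices G S ∧ ∀ y ∈ linkVertices G S, ¬ G.Adj x y := Finset.mem_filter
  refine ⟨S ∪ isolated, isIndepSet_union_of_subset_linkVertices hS (Finset.filter_subset _ _)
    fun x hx y hy _ => (mem_isolated.1 hx).2 y (mem_isolated.1 hy).1, fun x => ⟨fun hx => ?_, ?_⟩⟩
  · obtain ⟨hx_notMem, hx_adj⟩ := mem_linkVertices.1 hx
    have x_mem : x ∈ linkVertices G S := mem_linkVertices.2
      ⟨mt (Finset.mem_union_left _) hx_notMem, fun w hw => hx_adj w (Finset.mem_union_left _ hw)⟩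
    refine ⟨x_mem, ?_⟩
    by_contra! not_adj
    exact hx_notMem (Finset.mem_union_right _ (mem_isolated.2 ⟨x_mem, not_adj⟩))
  · rintro ⟨x_mem, y, y_mem, hxy⟩
    rw [mem_linkVertices, Finset.mem_union, not_or]
    refine ⟨⟨(mem_linkVertices.1 x_mem).1, fun hx => (mem_isolated.1 hx).2 y y_mem hxy⟩,
      fun w hw => (Finset.mem_union.1 hw).elim ((mem_linkVertices.1 x_mem).2 w)
        fun hw => (mem_isolated.1 hw).2 x x_mem⟩

end LinkOfUnion

section SequentiallyCohenMacaulay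

variable {n : ℕ} {K : Type} [Field K] {G : SimpleGraph (Fin n)} {S A B : Finset (Fin n)}

theorem exists_maximal_inter_mem_otherFaces {F₁ : Finset (Fin n)}
    (h : ∃ F ∈ otherFaces G F₁, S ⊆ F) :
    ∃ F ∈ otherFaces G F₁, S ⊆ F ∧ ∀ F' ∈ otherFaces G F₁, S ⊆ F' → ¬ F ∩ F₁ ⊂ F' ∩ F₁ := by
  obtain ⟨F, ⟨hF, hSF⟩, hmax⟩ :=
    (Set.toFinite {F | F ∈ otherFaces G F₁ ∧ S ⊆ F}).exists_maximalFor (· ∩ F₁) _ h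
  exact ⟨F, hF, hSF, fun F' hF' hSF' hlt => hlt.not_ge (hmax ⟨hF', hSF'⟩ hlt.le)⟩

theorem card_inter_add_two_le {α : Type*} [DecidableEq α] {F C : Finset α} {x y : α} (hx : x ∈ C)
    (hy : y ∈ C) (hxy : x ≠ y) (hxF : x ∉ F) (hyF : y ∉ F) : (F ∩ C).card + 2 ≤ C.card := by
  rw [← Finset.card_pair hxy, ← Finset.card_union_of_disjoint]
  · refine Finset.card_le_card (Finset.union_subset Finset.inter_subset_right ?_)
    simp [Finset.insert_subset_iff, hx, hy]
  · simp [hxF, hyF]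

/-- A face `F ⊇ S` other than `S ∪ A`, with at least as many vertices and with maximal trace on
`S ∪ A`, has a vertex in `B`; two neighbours of it in `A` would be missing from `F`. -/
theorem exists_unique_neighbor_of_isSeqCM (hscm : IsSeqCM K (graphIdeal K G))
    (hS : G.IsIndepSet S) (hA : G.IsIndepSet A) (hB : G.IsIndepSet B) (hAB : Disjoint A B)
    (hlink : linkVertices G S = A ∪ B) (hcard : A.card ≤ B.card) (hBne : B.Nonempty) :
    ∃ b ∈ B, ∀ x ∈ A, ∀ y ∈ A, G.Adj b x → G.Adj b y → x = y := by
  have A_subset : A ⊆ linkVertices G S := hlink ▸ Finset.subset_union_left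
  have B_subset : B ⊆ linkVertices G S := hlink ▸ Finset.subset_union_right
  have disjoint_B : Disjoint (S ∪ A) B :=
    Finset.disjoint_union_left.2 ⟨disjoint_linkVertices.mono_right B_subset, hAB⟩
  have SB_mem : S ∪ B ∈ otherFaces G (S ∪ A) := by
    refine ⟨isIndepSet_union_of_subset_linkVertices hS B_subset hB, fun h => ?_, ?_⟩
    · obtain ⟨b, hb⟩ := hBne
      exact Finset.disjoint_right.1 disjoint_B hb (h ▸ Finset.mem_union_right S hb)
    · rw [Finset.card_union_of_disjoint (disjoint_linkVertices.mono_right A_subset),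
        Finset.card_union_of_disjoint (disjoint_linkVertices.mono_right B_subset)]
      omega
  obtain ⟨F, hF, hSF, hmax⟩ :=
    exists_maximal_inter_mem_otherFaces ⟨S ∪ B, SB_mem, Finset.subset_union_left⟩
  obtain ⟨hFindep, hFne, hFcard⟩ := hF
  obtain ⟨b, hbF, hbSA⟩ := Finset.not_subset.1 fun h =>
    hFne (Finset.eq_of_subset_of_card_le h hFcard)
  have hbB : b ∈ B := by
    have := subset_union_linkVertices hFindep hSF hbF
    rw [hlink, ← Finset.union_assoc] at this
    exact (Finset.mem_union.1 this).resolve_left hbSA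
  refine ⟨b, hbB, fun x hx y hy hbx hby => ?_⟩
  by_contra hxy
  have notMem_F {z : Fin n} (hbz : G.Adj b z) : z ∉ F := fun hz => hFindep hbF hz hbz.ne hbz
  have card_trace : (F ∩ (S ∪ A)).card + 2 ≤ (S ∪ A).card :=
    card_inter_add_two_le (Finset.mem_union_right S hx) (Finset.mem_union_right S hy) hxy
      (notMem_F hbx) (notMem_F hby)
  obtain ⟨F', hF', hlt⟩ := exists_ssubset_inter_of_isSeqCM hscm
    (isIndepSet_union_of_subset_linkVertices hS A_subset hA) Finset.inter_subset_right card_trace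
    ⟨F, ⟨hFindep, hFne, hFcard⟩, Finset.inter_subset_left⟩
  refine hmax F' hF' (fun s hs => ?_) hlt
  exact (Finset.mem_inter.1 (hlt.subset (Finset.mem_inter.2
    ⟨hSF hs, Finset.mem_union_left A hs⟩))).1

theorem hasLeafProperty_of_isSeqCM (hbip : G.IsBipartiteGraph)
    (hscm : IsSeqCM K (graphIdeal K G)) : HasLeafProperty G := by
  classical
  rintro σ hσ ⟨u, hu, v, hv, huv⟩
  obtain ⟨T, hT, mem_link⟩ := exists_isIndepSet_linkVertices_nonisolated hσ
  obtain ⟨side, hside⟩ := hbip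
  wlog hcard : {x ∈ linkVertices G T | x ∈ side}.card ≤ {x ∈ linkVertices G T | x ∉ side}.card
    generalizing side
  · refine this sideᶜ (fun u v huv => ?_) ?_
    · simpa using not_iff_not.2 (hside u v huv)
    · simpa using (not_le.1 hcard).le
  have indep_left : G.IsIndepSet ({x ∈ linkVertices G T | x ∈ side} : Finset (Fin n)) :=
    fun x hx y hy _ hxy =>
      (hside x y hxy).1 (Finset.mem_filter.1 hx).2 (Finset.mem_filter.1 hy).2
  have indep_right : G.IsIndepSet ({x ∈ linkVertices G T | x ∉ side} : Finset (Fin n)) :=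
    fun x hx y hy _ hxy =>
      (Finset.mem_filter.1 hx).2 ((hside x y hxy).2 (Finset.mem_filter.1 hy).2)
  have right_nonempty : {x ∈ linkVertices G T | x ∉ side}.Nonempty := by
    by_cases hus : u ∈ side
    · exact ⟨v, Finset.mem_filter.2 ⟨(mem_link v).2 ⟨hv, u, hu, huv.symm⟩, (hside u v huv).1 hus⟩⟩
    · exact ⟨u, Finset.mem_filter.2 ⟨(mem_link u).2 ⟨hu, v, hv, huv⟩, hus⟩⟩
  obtain ⟨b, hb, unique⟩ := exists_unique_neighbor_of_isSeqCM hscm hT indep_left indep_right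
    (Finset.disjoint_filter_filter_not _ _ _) (Finset.filter_union_filter_not_eq _ _).symm hcard
    right_nonempty
  obtain ⟨hb, hbs⟩ := Finset.mem_filter.1 hb
  obtain ⟨hbσ, y, hy, hby⟩ := (mem_link b).1 hb
  have neighbor_mem {z : Fin n} (hz : z ∈ linkVertices G σ) (hbz : G.Adj b z) :
      z ∈ {x ∈ linkVertices G T | x ∈ side} :=
    Finset.mem_filter.2 ⟨(mem_link z).2 ⟨hz, b, hbσ, hbz.symm⟩, (hside z b hbz.symm).2 hbs⟩
  exact ⟨b, y, hbσ, hy, hby, fun z hz hbz =>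
    unique z (neighbor_mem hz hbz) y (neighbor_mem hy hby) hbz hby⟩

end SequentiallyCohenMacaulay

section InducedMatchingNumber

variable {V : Type} [DecidableEq V] {G : SimpleGraph V}

theorem bddAbove_inducedMatching [Finite V] :
    BddAbove {r | ∃ f : Fin r → V × V, G.IsInducedMatching f} := by
  refine ⟨Nat.card V, fun r ⟨f, hf⟩ => ?_⟩
  have fst_injective : Function.Injective fun i => (f i).1 := by
    intro i j hij
    by_contra hne
    exact ((isInducedMatching_iff.1 hf).2 i j hne _ (Finset.mem_insert_self _ _) _
      (Finset.mem_insert_self _ _)).1 hij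
  simpa using Nat.card_le_card_of_injective _ fst_injective

theorem exists_isInducedMatching_imG [Finite V] :
    ∃ f : Fin (imG G) → V × V, G.IsInducedMatching f :=
  Nat.sSup_mem (s := {r | ∃ f : Fin r → V × V, G.IsInducedMatching f})
    ⟨0, Fin.elim0, isInducedMatching_iff.2 ⟨fun i => i.elim0, fun i => i.elim0⟩⟩
    bddAbove_inducedMatching

end InducedMatchingNumber

section Regularity

variable {n : ℕ} {K : Type} [Field K]

theorem regR_eq_of_hasRegularityLE_iff {I : Ideal (MvPolynomial (Fin n) K)}
    (hI : ∀ p ∈ I, ∀ d, homogeneousComponent d p ∈ I) {r : ℕ}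
    (h : ∀ c, HasRegularityLE I c ↔ r ≤ c) : regR I = r := by
  have resolutions_eq : {c | ∃ F : GFR n K I, ∀ i j, F.tw i j ≤ c + i} = Set.Ici r := by
    ext c
    rw [Set.mem_Ici, ← h]
    exact ⟨fun ⟨F, hF⟩ => exists_hasBoundedRes_of_GFR hI F hF,
      fun ⟨_, hF⟩ => exists_GFR_of_hasBoundedRes hF⟩
  rw [regR, resolutions_eq, csInf_Ici]

theorem regR_graphIdeal_of_hasLeafProperty {G : SimpleGraph (Fin n)} (hG : HasLeafProperty G) :
    regR (graphIdeal K G) = imG G := by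
  have homogeneous : ∀ p ∈ graphIdeal K G, ∀ d, homogeneousComponent d p ∈ graphIdeal K G := by
    rw [graphIdeal_eq_edgeVarIdeal]
    exact homogeneousComponent_mem_restrictSupportIdeal
  refine regR_eq_of_hasRegularityLE_iff homogeneous fun c => ⟨fun hc => ?_, fun hc => ?_⟩
  · obtain ⟨f, hf⟩ := exists_isInducedMatching_imG (G := G)
    exact hc.le_of_isInducedMatching hf
  · exact hasRegularityLE_graphIdeal hG fun r f hf _ =>
      (le_csSup bddAbove_inducedMatching ⟨f, hf⟩).trans hc

end Regularity

end SeqCMBipartite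

/-- If `G` is a bipartite graph and `R/I(G)` is sequentially
Cohen–Macaulay, then `reg(R/I(G)) = im(G)`. -/
theorem stmt_9 (K : Type) [Field K] {n : ℕ} (G : SimpleGraph (Fin n))
    (hbip : G.IsBipartiteGraph) (hscm : IsSeqCM K (graphIdeal K G)) :
    regR (graphIdeal K G) = imG G :=
  SeqCMBipartite.regR_graphIdeal_of_hasLeafProperty
    (SeqCMBipartite.hasLeafProperty_of_isSeqCM hbip hscm)
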